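/- arXiv:2110.09339 — 4 statements merged into one kernel-verified Lean document; each statement's English description precedes it below -/
import Mathlib

section
/- Let K ≥ 1 and let v : ℤ → ℝ be a K-periodic potential taking only integer values (v(n) ∈ ℤ for all n ∈ ℤ). If the discrete Schrödinger operator H on ℓ²(ℤ) with potential v is bijective, then the finite section method is applicable to H; in particular, the sequence of finite sections (Hₙ) is stable: there exist n₀ ∈ ℕ and C > 0 such that for all n ≥ n₀ the matrix Hₙ is invertible and ‖Hₙ⁻¹‖ ≤ C. -/
/-!
Let `e_j` be the standard basis vectors and `g_j = H⁻¹ e_j`.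

*Diagonal of the inverse.* If `g_j(j) = 0`, then on either side of `j` the vector `g_j` solves the
three-term recurrence with Dirichlet condition at `j`, so there it is `g_j(j ± 1)` times an
*integer* sequence. Since `g_j` tends to zero, the integer sequence vanishes eventually unless
`g_j(j ± 1) = 0`, and the backward recurrence then makes it vanish identically
(`dirichlet_eq_zero`). So `g_j(j + 1) = g_j(j - 1) = 0`, contradicting `(H g_j)(j) = 1`.
By periodicity `g_{j+K}` is a translate of `g_j`, so `|g_j(j)| ≥ δ > 0` for all `j`, and
`g_j(k)` becomes small, uniformly in `j`, as `|k - j| → ∞` (`exists_uniform`).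

*Stability.* Let `y` be supported in `[-n, n]`. Then
`H y = f + y(-n) e_{-n-1} + y(n) e_{n+1}`, where `f` is the finite section applied to `y`.
As `H` is self-adjoint, `⟪g_{±(n+1)}, H y⟫ = ⟪e_{±(n+1)}, y⟫ = 0`. For large `n` these two equations
form a diagonally dominant system for the boundary values `y(±n)`, which bounds them by a
multiple of `‖f‖` (`boundary_estimate`). Together with `‖y‖ ≤ ‖H⁻¹‖ ‖H y‖` this gives
`‖y‖ ≤ C ‖f‖` with `C` independent of `n`.
-/


noncomputable section

open Matrix

/-- The `n`-th (two-sided) finite section of the discrete Schrödinger operator with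
potential `v`: the `(2n+1) × (2n+1)` tridiagonal matrix with diagonal entries
`v (-n), …, v n` and entries `1` on the first sub- and superdiagonal. -/
def schFinSec (v : ℤ → ℝ) (n : ℕ) : Matrix (Fin (2 * n + 1)) (Fin (2 * n + 1)) ℂ :=
  Matrix.of fun i j =>
    if (i : ℤ) = (j : ℤ) then ((v ((i : ℤ) - (n : ℤ))) : ℂ)
    else if (i : ℤ) = (j : ℤ) + 1 ∨ (j : ℤ) = (i : ℤ) + 1 then 1 else 0

/-! ### Translates, symmetry and decay in `ℓ²(ℤ)` -/

/-- The Hilbert space `ℓ²(ℤ)`. -/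
abbrev SeqZ := lp (fun _ : ℤ => ℂ) 2

/-- The translate `k ↦ x (k + s)` of a square-summable sequence. -/
def shiftSeq (s : ℤ) (x : SeqZ) : SeqZ :=
  ⟨fun k => x (k + s), by
    have h := (memℓp_gen_iff (p := 2) (by norm_num)).1 (lp.memℓp x)
    exact (memℓp_gen_iff (p := 2) (by norm_num)).2
      (h.comp_injective (add_left_injective s))⟩

lemma shiftSeq_apply (s : ℤ) (x : SeqZ) (k : ℤ) : shiftSeq s x k = x (k + s) := rfl

lemma inner_shiftSeq (s : ℤ) (x y : SeqZ) :
    inner ℂ (shiftSeq s x) y = inner ℂ x (shiftSeq (-s) y) := by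
  rw [lp.inner_eq_tsum, lp.inner_eq_tsum]
  rw [← (Equiv.addRight s).tsum_eq (fun k => inner ℂ (x k) (shiftSeq (-s) y k))]
  refine tsum_congr fun k => ?_
  simp [shiftSeq_apply]

lemma inner_sch_comm (v : ℤ → ℝ) (H : SeqZ →L[ℂ] SeqZ)
    (hH : ∀ x : SeqZ, ∀ n : ℤ, H x n = x (n + 1) + x (n - 1) + (v n : ℂ) * x n) (x y : SeqZ) :
    inner ℂ (H x) y = inner ℂ x (H y) := by
  -- The multiplication part, written as a difference so that it lies in `ℓ²(ℤ)`.
  set V : SeqZ → SeqZ := fun z => H z - shiftSeq 1 z - shiftSeq (-1) z with hVdef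
  have hV : ∀ z : SeqZ, ∀ k : ℤ, V z k = (v k : ℂ) * z k := by
    intro z k
    simp only [hVdef, lp.coeFn_sub, Pi.sub_apply, hH, shiftSeq_apply, ← sub_eq_add_neg]
    ring
  have hdec : ∀ z : SeqZ, H z = V z + shiftSeq 1 z + shiftSeq (-1) z := by
    intro z; simp only [hVdef]; abel
  have hVs : inner ℂ (V x) y = inner ℂ x (V y) := by
    rw [lp.inner_eq_tsum, lp.inner_eq_tsum]
    refine tsum_congr fun k => ?_
    rw [hV, hV]
    simp
    ring
  rw [hdec x, hdec y]
  simp only [inner_add_left, inner_add_right, hVs, inner_shiftSeq, neg_neg]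
  ring

lemma seq_tendsto (x : SeqZ) : Filter.Tendsto (fun k => ‖x k‖) Filter.cofinite (nhds 0) := by
  have h := (memℓp_gen_iff (p := 2) (by norm_num)).1 (lp.memℓp x)
  have h2 := h.tendsto_cofinite_zero
  have h3 := h2.sqrt
  refine (h3.congr fun k => ?_).trans (by simp)
  simp

/-! ### The inverse of `H` on and off the diagonal -/

/-- A null sequence solving a three-term recurrence with integer coefficients and `u 0 = 0`
has `u 1 = 0` (hence vanishes): it is `u 1` times an integer sequence. -/
lemma dirichlet_eq_zero (u : ℕ → ℂ) (w : ℕ → ℤ) (h0 : u 0 = 0)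
    (hrec : ∀ m, u (m + 2) + u m + (w m : ℂ) * u (m + 1) = 0)
    (hlim : Filter.Tendsto (fun m => ‖u m‖) Filter.atTop (nhds 0)) : u 1 = 0 := by
  by_contra h1
  have hint : ∀ m, (∃ p : ℤ, u m = p * u 1) ∧ ∃ p : ℤ, u (m + 1) = p * u 1 := by
    intro m
    induction m with
    | zero => exact ⟨⟨0, by simp [h0]⟩, ⟨1, by simp⟩⟩
    | succ m ih =>
      obtain ⟨⟨p, hp⟩, q, hq⟩ := ih
      refine ⟨⟨q, hq⟩, ⟨-p - w m * q, ?_⟩⟩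
      have := hrec m
      rw [hp, hq] at this
      push_cast
      linear_combination this
  have hev := hlim.eventually (gt_mem_nhds (norm_pos_iff.2 h1))
  obtain ⟨M, hM⟩ := Filter.eventually_atTop.1 hev
  have hz : ∀ m, M ≤ m → u m = 0 := by
    intro m hm
    obtain ⟨p, hp⟩ := (hint m).1
    have hlt := hM m hm
    rw [hp, norm_mul] at hlt
    have hp1 : ‖(p : ℂ)‖ < 1 := by
      by_contra hc
      push Not at hc
      nlinarith [norm_pos_iff.2 h1]
    rw [Complex.norm_intCast] at hp1
    have hp0 : p = 0 := Int.abs_lt_one_iff.1 (by exact_mod_cast hp1)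
    rw [hp, hp0]; simp
  have hback : ∀ d m, M ≤ m + d → u m = 0 ∧ u (m + 1) = 0 := by
    intro d
    induction d with
    | zero => intro m hm; exact ⟨hz m (by omega), hz _ (by omega)⟩
    | succ d ih =>
      intro m hm
      obtain ⟨ha, hb⟩ := ih (m + 1) (by omega)
      have := hrec m
      rw [ha, show m + 2 = m + 1 + 1 by ring, hb] at this
      exact ⟨by simpa using this, ha⟩
  exact h1 (hback M 0 (by omega)).2

/-- The diagonal entries of the inverse of `H` do not vanish. -/
lemma diag_ne_zero (v : ℤ → ℝ) (hint : ∀ n : ℤ, ∃ m : ℤ, v n = (m : ℝ))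
    (H : SeqZ →L[ℂ] SeqZ)
    (hH : ∀ x : SeqZ, ∀ n : ℤ, H x n = x (n + 1) + x (n - 1) + (v n : ℂ) * x n)
    (g : SeqZ) (j : ℤ) (hg : H g = lp.single 2 j 1) : g j ≠ 0 := by
  intro h0
  choose w hw using hint
  have hk : ∀ k, k ≠ j → g (k + 1) + g (k - 1) + (w k : ℂ) * g k = 0 := by
    intro k hk
    have := hH g k
    rw [hg, lp.single_apply_ne _ _ _ hk, hw] at this
    rw [Complex.ofReal_intCast] at this
    exact this.symm
  have hright : g (j + 1) = 0 := by
    have := dirichlet_eq_zero (fun m => g (j + m)) (fun m => w (j + m + 1)) (by simpa using h0)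
      (fun m => by
        have := hk (j + m + 1) (by omega)
        rw [show j + m + 1 + 1 = j + (m + 2 : ℕ) by push_cast; ring,
          show j + m + 1 - 1 = j + m by ring] at this
        simpa [add_assoc] using this)
      ((seq_tendsto g).comp ((Function.Injective.tendsto_cofinite
        (f := fun m : ℕ => j + (m : ℤ)) (fun a b h => by simpa using h)).mono_left
          Nat.cofinite_eq_atTop.ge))
    simpa using this
  have hleft : g (j - 1) = 0 := by
    have := dirichlet_eq_zero (fun m => g (j - m)) (fun m => w (j - m - 1)) (by simpa using h0)
      (fun m => by
        have := hk (j - m - 1) (by omega)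
        rw [show j - m - 1 - 1 = j - (m + 2 : ℕ) by push_cast; ring,
          show j - m - 1 + 1 = j - m by ring] at this
        rw [← this, show j - (m : ℤ) - 1 = j - (m + 1 : ℕ) by push_cast; ring]
        ring)
      ((seq_tendsto g).comp ((Function.Injective.tendsto_cofinite
        (f := fun m : ℕ => j - (m : ℤ)) (fun a b h => by simpa using h)).mono_left
          Nat.cofinite_eq_atTop.ge))
    simpa using this
  have := hH g j
  rw [hg, lp.single_apply_self, h0, hright, hleft] at this
  simp at this

/-- Periodicity makes the lower bound on the diagonal of the inverse and the off-diagonal decay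
uniform in the row. -/
lemma exists_uniform (K : ℕ) (hK : 1 ≤ K) (v : ℤ → ℝ) (hper : ∀ n : ℤ, v (n + (K : ℤ)) = v n)
    (hint : ∀ n : ℤ, ∃ m : ℤ, v n = (m : ℝ)) (H : SeqZ →L[ℂ] SeqZ)
    (hH : ∀ x : SeqZ, ∀ n : ℤ, H x n = x (n + 1) + x (n - 1) + (v n : ℂ) * x n)
    (hinj : Function.Injective H) (g : ℤ → SeqZ) (hg : ∀ j, H (g j) = lp.single 2 j 1) :
    ∃ δ : ℝ, 0 < δ ∧ ∃ M : ℕ, ∀ j : ℤ, δ ≤ ‖g j j‖ ∧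
      ∀ k : ℤ, (M : ℤ) ≤ |k - j| → ‖g j k‖ ≤ δ / 2 := by
  have hshift : ∀ s, Function.Periodic (fun j => g j (j + s)) (K : ℤ) := by
    intro s j
    have h : shiftSeq K (g (j + K)) = g j := by
      apply hinj
      ext k
      have h1 := hH (g (j + K)) (k + K)
      rw [hg, hper] at h1
      rw [hH, hg, shiftSeq_apply, shiftSeq_apply, shiftSeq_apply,
        show k + 1 + (K : ℤ) = k + K + 1 by ring, show k - 1 + (K : ℤ) = k + K - 1 by ring, ← h1]
      simp [lp.single_apply, Pi.single_apply]
    change g (j + K) (j + K + s) = g j (j + s)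
    rw [← h, shiftSeq_apply, show j + s + (K : ℤ) = j + K + s by ring]
  have hmod : ∀ j s, g j (j + s) = g (j % K) (j % K + s) := by
    intro j s
    have := (hshift s).int_mul (j / K) (j % K)
    simp only [] at this
    rw [← this, mul_comm, Int.cast_id, Int.emod_add_mul_ediv]
  have hmem : ∀ j : ℤ, j % K ∈ Finset.Ico (0 : ℤ) K := by
    intro j
    rw [Finset.mem_Ico]
    exact ⟨Int.emod_nonneg _ (by omega), Int.emod_lt_of_pos _ (by omega)⟩
  obtain ⟨j₀, -, hj₀⟩ := Finset.exists_min_image (Finset.Ico (0 : ℤ) K) (fun j => ‖g j j‖)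
    ⟨_, hmem 0⟩
  have hδ : 0 < ‖g j₀ j₀‖ := norm_pos_iff.2 (diag_ne_zero v hint H hH _ _ (hg j₀))
  refine ⟨_, hδ, ?_⟩
  have hex : ∀ j : ℤ, ∃ M : ℕ, ∀ s : ℤ, (M : ℤ) ≤ |s| → ‖g j (j + s)‖ ≤ ‖g j₀ j₀‖ / 2 := by
    intro j
    have hev := (seq_tendsto (g j)).eventually (gt_mem_nhds (half_pos hδ))
    have hfin : {k : ℤ | ¬ ‖g j k‖ < ‖g j₀ j₀‖ / 2}.Finite := hev
    obtain ⟨B, hB⟩ := (hfin.image (fun k => (k - j).natAbs)).bddAbove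
    refine ⟨B + 1, fun s hs => ?_⟩
    by_contra hc
    have := hB ⟨j + s, fun h => hc h.le, rfl⟩
    rw [Int.abs_eq_natAbs] at hs
    simp at this
    omega
  choose M hM using hex
  refine ⟨(Finset.Ico (0 : ℤ) K).sup M, fun j => ⟨?_, fun k hk => ?_⟩⟩
  · have := hmod j 0
    rw [add_zero, add_zero] at this
    rw [this]
    exact hj₀ _ (hmem j)
  · have := hmod j (k - j)
    rw [add_sub_cancel] at this
    rw [this]
    refine hM _ _ (le_trans ?_ hk)
    exact_mod_cast Finset.le_sup (f := M) (hmem j)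

/-! ### Control of the boundary values -/

/-- For `y` supported in `[-n, n]` with `n` large, `‖y‖` is controlled by the truncation `f` of
`H y` to `[-n, n]`: pairing `H y` with `H⁻¹ e_{±(n+1)}` controls the boundary values `y (±n)`. -/
lemma boundary_estimate (v : ℤ → ℝ) (H : SeqZ →L[ℂ] SeqZ)
    (hH : ∀ x : SeqZ, ∀ n : ℤ, H x n = x (n + 1) + x (n - 1) + (v n : ℂ) * x n)
    (g : ℤ → SeqZ) (hg : ∀ j, H (g j) = lp.single 2 j 1)
    (A : ℝ) (hA : ∀ x, ‖x‖ ≤ A * ‖H x‖)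
    (δ : ℝ) (hδ : 0 < δ) (M : ℕ) (hM : ∀ j : ℤ, δ ≤ ‖g j j‖ ∧
      ∀ k : ℤ, (M : ℤ) ≤ |k - j| → ‖g j k‖ ≤ δ / 2)
    (n : ℕ) (hn : M ≤ n) (y f : SeqZ) (hy : ∀ k : ℤ, (n : ℤ) < |k| → y k = 0)
    (hf : H y = f + lp.single 2 (-n - 1 : ℤ) (y (-n)) + lp.single 2 (n + 1 : ℤ) (y n)) :
    ‖y‖ ≤ A * (1 + 4 * A / δ) * ‖f‖ := by
  have hgA : ∀ j, ‖g j‖ ≤ A := by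
    intro j
    have := hA (g j)
    rwa [hg, lp.norm_single (by norm_num), norm_one, mul_one] at this
  have hA0 : 0 ≤ A := (norm_nonneg _).trans (hgA 0)
  have hpair : ∀ j : ℤ, (n : ℤ) < |j| →
      inner ℂ (g j) f + inner ℂ (g j (-n - 1)) (y (-n)) + inner ℂ (g j (n + 1)) (y n) = 0 := by
    intro j hj
    have h := inner_sch_comm v H hH (g j) y
    rw [hg, lp.inner_single_left, hy j hj, inner_zero_right, hf, inner_add_right, inner_add_right,
      lp.inner_single_right, lp.inner_single_right] at h
    exact h.symm
  have hin : ∀ j, ‖(inner ℂ (g j) f : ℂ)‖ ≤ A * ‖f‖ := fun j =>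
    (norm_inner_le_norm _ _).trans (mul_le_mul_of_nonneg_right (hgA j) (norm_nonneg _))
  have hnorm : ∀ a b : ℂ, ‖(inner ℂ a b : ℂ)‖ = ‖a‖ * ‖b‖ := by
    intro a b; simp [mul_comm]
  -- The diagonal term of each pairing is dominated by the other two.
  have hb : δ * ‖y n‖ ≤ A * ‖f‖ + δ / 2 * ‖y (-n)‖ := by
    have h := hpair (n + 1) (by rw [abs_of_nonneg] <;> omega)
    have h' : inner ℂ (g (n + 1) (n + 1)) (y n) =
        -(inner ℂ (g (n + 1)) f + inner ℂ (g (n + 1) (-n - 1)) (y (-n))) := by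
      linear_combination h
    have h2 := congrArg norm h'
    rw [norm_neg, hnorm] at h2
    have h3 := norm_add_le (inner ℂ (g (n + 1)) f) (inner ℂ (g (n + 1) (-n - 1)) (y (-n)))
    rw [hnorm] at h3
    have h4 := (hM (n + 1)).2 (-n - 1) (by rw [abs_of_nonpos] <;> omega)
    have h5 := mul_le_mul_of_nonneg_right h4 (norm_nonneg (y (-n)))
    have h6 := mul_le_mul_of_nonneg_right (hM (n + 1)).1 (norm_nonneg (y n))
    linarith [hin (n + 1)]
  have ha : δ * ‖y (-n)‖ ≤ A * ‖f‖ + δ / 2 * ‖y n‖ := by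
    have h := hpair (-n - 1) (by rw [abs_of_nonpos] <;> omega)
    have h' : inner ℂ (g (-n - 1) (-n - 1)) (y (-n)) =
        -(inner ℂ (g (-n - 1)) f + inner ℂ (g (-n - 1) (n + 1)) (y n)) := by
      linear_combination h
    have h2 := congrArg norm h'
    rw [norm_neg, hnorm] at h2
    have h3 := norm_add_le (inner ℂ (g (-n - 1)) f) (inner ℂ (g (-n - 1) (n + 1)) (y n))
    rw [hnorm] at h3
    have h4 := (hM (-n - 1)).2 (n + 1) (by rw [abs_of_nonneg] <;> omega)
    have h5 := mul_le_mul_of_nonneg_right h4 (norm_nonneg (y n))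
    have h6 := mul_le_mul_of_nonneg_right (hM (-n - 1)).1 (norm_nonneg (y (-n)))
    linarith [hin (-n - 1)]
  have hab : ‖y (-n)‖ + ‖y n‖ ≤ 4 * A / δ * ‖f‖ := by
    rw [div_mul_eq_mul_div, le_div_iff₀ hδ]
    nlinarith
  have hHy : ‖H y‖ ≤ ‖f‖ + ‖y (-n)‖ + ‖y n‖ := by
    rw [hf]
    refine (norm_add₃_le).trans ?_
    rw [lp.norm_single (by norm_num), lp.norm_single (by norm_num)]
  calc ‖y‖ ≤ A * ‖H y‖ := hA y
    _ ≤ A * ((1 + 4 * A / δ) * ‖f‖) := mul_le_mul_of_nonneg_left (by linarith) hA0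
    _ = _ := by ring

/-! ### Finite sections as truncations of `H` -/

/-- Extension of a vector on `{-n, …, n}` by zero. -/
def extZero (n : ℕ) (x : EuclideanSpace ℂ (Fin (2 * n + 1))) : SeqZ :=
  ∑ i : Fin (2 * n + 1), lp.single 2 ((i : ℤ) - n) (x i)

lemma extZero_apply_mem (n : ℕ) (x : EuclideanSpace ℂ (Fin (2 * n + 1))) (i : Fin (2 * n + 1)) :
    extZero n x ((i : ℤ) - n) = x i := by
  rw [extZero, lp.coeFn_sum, Finset.sum_apply, Finset.sum_eq_single i]
  · simp
  · intro b _ hb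
    refine lp.single_apply_ne _ _ _ ?_
    intro h
    exact hb (Fin.ext (by omega))
  · simp

lemma extZero_apply_not_mem (n : ℕ) (x : EuclideanSpace ℂ (Fin (2 * n + 1))) (k : ℤ)
    (hk : (n : ℤ) < |k|) : extZero n x k = 0 := by
  rw [extZero, lp.coeFn_sum, Finset.sum_apply]
  refine Finset.sum_eq_zero fun i _ => lp.single_apply_ne _ _ _ ?_
  rintro rfl
  have := i.2
  rw [lt_abs] at hk
  omega

lemma norm_extZero (n : ℕ) (x : EuclideanSpace ℂ (Fin (2 * n + 1))) : ‖extZero n x‖ = ‖x‖ := by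
  have h := lp.norm_rpow_eq_tsum (p := 2) (by norm_num) (extZero n x)
  have hinj : Function.Injective (fun i : Fin (2 * n + 1) => (i : ℤ) - n) := by
    intro a b hab
    exact Fin.ext (by simpa using hab)
  rw [← hinj.tsum_eq, tsum_fintype] at h
  · simp only [extZero_apply_mem, ENNReal.toReal_ofNat, Real.rpow_two] at h
    rw [← EuclideanSpace.norm_sq_eq] at h
    exact (sq_eq_sq₀ (norm_nonneg _) (norm_nonneg _)).1 h
  · intro k hk
    by_contra hc
    refine hk ?_
    have : (n : ℤ) < |k| := by
      by_contra hle
      rw [not_lt, abs_le] at hle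
      exact hc ⟨⟨(k + n).toNat, by omega⟩, by simp; omega⟩
    simp [extZero_apply_not_mem n x k this]

/-- Inside the window `[-n, n]`, the finite section acts as `H` on the extension by zero. -/
lemma schFinSec_mulVec (v : ℤ → ℝ) (n : ℕ) (x : EuclideanSpace ℂ (Fin (2 * n + 1)))
    (i : Fin (2 * n + 1)) :
    (schFinSec v n *ᵥ x.ofLp) i =
      extZero n x ((i : ℤ) - n + 1) + extZero n x ((i : ℤ) - n - 1)
        + (v ((i : ℤ) - n) : ℂ) * extZero n x ((i : ℤ) - n) := by
  set y := extZero n x with hy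
  have hsum : (schFinSec v n *ᵥ x.ofLp) i = ∑ j ∈ Finset.range (2 * n + 1),
      ((if j = (i : ℕ) then (v ((i : ℤ) - n) : ℂ) * y ((i : ℤ) - n) else 0)
        + (if j = (i : ℕ) + 1 then y ((i : ℤ) - n + 1) else 0)
        + (if j + 1 = (i : ℕ) then y ((i : ℤ) - n - 1) else 0)) := by
    rw [← Fin.sum_univ_eq_sum_range (fun j : ℕ =>
      ((if j = (i : ℕ) then (v ((i : ℤ) - n) : ℂ) * y ((i : ℤ) - n) else 0)
        + (if j = (i : ℕ) + 1 then y ((i : ℤ) - n + 1) else 0)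
        + (if j + 1 = (i : ℕ) then y ((i : ℤ) - n - 1) else 0)))]
    rw [Matrix.mulVec, dotProduct]
    refine Finset.sum_congr rfl fun j _ => ?_
    rw [schFinSec, Matrix.of_apply, show x.ofLp j = y ((j : ℤ) - n) from
      (extZero_apply_mem n x j).symm]
    rcases lt_trichotomy (j : ℕ) (i : ℕ) with h | h | h
    · by_cases h1 : (j : ℕ) + 1 = i
      · have e : (j : ℤ) - n = (i : ℤ) - n - 1 := by omega
        rw [if_neg (by omega), if_pos (by omega), if_neg (by omega), if_neg (by omega),
          if_pos h1, e]
        ring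
      · rw [if_neg (by omega), if_neg (by omega), if_neg (by omega), if_neg (by omega),
          if_neg h1]
        ring
    · rw [if_pos (by omega), if_pos h, if_neg (by omega), if_neg (by omega), h]
      ring
    · by_cases h1 : (j : ℕ) = i + 1
      · have e : (j : ℤ) - n = (i : ℤ) - n + 1 := by omega
        rw [if_neg (by omega), if_pos (by omega), if_neg (by omega), if_pos h1,
          if_neg (by omega), e]
        ring
      · rw [if_neg (by omega), if_neg (by omega), if_neg (by omega), if_neg h1,
          if_neg (by omega)]
        ring
  have hi := i.2
  rw [hsum, Finset.sum_add_distrib, Finset.sum_add_distrib, Finset.sum_ite_eq',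
    Finset.sum_ite_eq', if_pos (Finset.mem_range.2 hi)]
  -- At the ends of the window the missing neighbour is a zero of the extension.
  have h1 : (if (i : ℕ) + 1 ∈ Finset.range (2 * n + 1) then y ((i : ℤ) - n + 1) else 0)
      = y ((i : ℤ) - n + 1) := by
    split_ifs with h
    · rfl
    · rw [Finset.mem_range] at h
      exact (extZero_apply_not_mem n x _ (by rw [lt_abs]; omega)).symm
  have h2 : (∑ j ∈ Finset.range (2 * n + 1),
      (if j + 1 = (i : ℕ) then y ((i : ℤ) - n - 1) else 0)) = y ((i : ℤ) - n - 1) := by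
    rcases Nat.eq_zero_or_pos (i : ℕ) with h | h
    · rw [Finset.sum_eq_zero (fun j _ => if_neg (by omega))]
      exact (extZero_apply_not_mem n x _ (by rw [lt_abs]; omega)).symm
    · rw [Finset.sum_eq_single ((i : ℕ) - 1) (fun j _ hj => if_neg (by omega))
        (fun hj => absurd (Finset.mem_range.2 (by omega)) hj), if_pos (by omega)]
  rw [h1, h2]
  ring

lemma sch_extZero (v : ℤ → ℝ) (H : SeqZ →L[ℂ] SeqZ)
    (hH : ∀ x : SeqZ, ∀ n : ℤ, H x n = x (n + 1) + x (n - 1) + (v n : ℂ) * x n)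
    (n : ℕ) (x : EuclideanSpace ℂ (Fin (2 * n + 1))) :
    H (extZero n x) = extZero n (Matrix.toEuclideanCLM (𝕜 := ℂ) (schFinSec v n) x)
      + lp.single 2 (-n - 1 : ℤ) (extZero n x (-n))
      + lp.single 2 (n + 1 : ℤ) (extZero n x n) := by
  ext k
  simp only [lp.coeFn_add, Pi.add_apply]
  by_cases hk : |k| ≤ n
  · have hk' := abs_le.1 hk
    obtain ⟨i, rfl⟩ : ∃ i : Fin (2 * n + 1), (i : ℤ) - n = k :=
      ⟨⟨(k + n).toNat, by omega⟩, by simp; omega⟩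
    rw [lp.single_apply_ne _ _ _ (by omega), lp.single_apply_ne _ _ _ (by omega),
      extZero_apply_mem, Matrix.ofLp_toEuclideanCLM, schFinSec_mulVec, hH]
    ring
  · push Not at hk
    rw [hH, extZero_apply_not_mem _ _ _ hk, extZero_apply_not_mem _ _ _ hk]
    by_cases h1 : k = n + 1
    · subst h1
      rw [lp.single_apply_self, lp.single_apply_ne _ _ _ (by omega),
        extZero_apply_not_mem _ _ _ (by rw [lt_abs]; omega), add_sub_cancel_right]
      ring
    · by_cases h2 : k = -n - 1
      · subst h2
        rw [lp.single_apply_self, lp.single_apply_ne _ _ _ (by omega), sub_add_cancel,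
          extZero_apply_not_mem _ _ (-n - 1 - 1) (by rw [lt_abs]; omega)]
        ring
      · rw [lt_abs] at hk
        rw [lp.single_apply_ne _ _ _ h1, lp.single_apply_ne _ _ _ h2,
          extZero_apply_not_mem _ _ _ (by rw [lt_abs]; omega),
          extZero_apply_not_mem _ _ _ (by rw [lt_abs]; omega)]
        ring

/-! ### Stability -/

/-- for an integer-valued `K`-periodic potential, invertibility of the
two-sided discrete Schrödinger operator implies stability of its finite sections. -/
theorem stmt0 (K : ℕ) (hK : 1 ≤ K) (v : ℤ → ℝ)
    (hper : ∀ n : ℤ, v (n + (K : ℤ)) = v n)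
    (hint : ∀ n : ℤ, ∃ m : ℤ, v n = (m : ℝ))
    (H : lp (fun _ : ℤ => ℂ) 2 →L[ℂ] lp (fun _ : ℤ => ℂ) 2)
    (hH : ∀ x : lp (fun _ : ℤ => ℂ) 2, ∀ n : ℤ,
      H x n = x (n + 1) + x (n - 1) + (v n : ℂ) * x n)
    (hbij : Function.Bijective H) :
    ∃ n₀ : ℕ, ∃ C : ℝ, 0 < C ∧ ∀ n : ℕ, n₀ ≤ n →
      IsUnit (schFinSec v n) ∧
      ‖Matrix.toEuclideanCLM (𝕜 := ℂ) ((schFinSec v n)⁻¹)‖ ≤ C := by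
  set e := ContinuousLinearEquiv.ofBijective H (LinearMap.ker_eq_bot.2 hbij.1)
    (LinearMap.range_eq_top.2 hbij.2) with he
  set A : ℝ := ‖(e.symm : SeqZ →L[ℂ] SeqZ)‖ with hAdef
  have hA : ∀ x, ‖x‖ ≤ A * ‖H x‖ := by
    intro x
    have h := (e.symm : SeqZ →L[ℂ] SeqZ).le_opNorm (H x)
    rwa [ContinuousLinearEquiv.coe_coe, he, ContinuousLinearEquiv.ofBijective_symm_apply_apply] at h
  choose g hg using fun j : ℤ => hbij.2 (lp.single 2 j (1 : ℂ))
  obtain ⟨δ, hδ, M, hM⟩ := exists_uniform K hK v hper hint H hH hbij.1 g hg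
  have hA0 : 0 ≤ A := norm_nonneg _
  set C := A * (1 + 4 * A / δ) with hC
  have hC0 : 0 ≤ C := by positivity
  refine ⟨M, C + 1, by linarith, fun n hn => ?_⟩
  have hest : ∀ x : EuclideanSpace ℂ (Fin (2 * n + 1)),
      ‖x‖ ≤ C * ‖Matrix.toEuclideanCLM (𝕜 := ℂ) (schFinSec v n) x‖ := by
    intro x
    have := boundary_estimate v H hH g hg A hA δ hδ M hM n hn (extZero n x) _
      (extZero_apply_not_mem n x) (sch_extZero v H hH n x)
    rwa [norm_extZero, norm_extZero] at this
  have hunit : IsUnit (schFinSec v n) := by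
    rw [← Matrix.mulVec_injective_iff_isUnit]
    refine (injective_iff_map_eq_zero (schFinSec v n).mulVecLin).2 fun x hx => ?_
    have h := hest (WithLp.toLp 2 x)
    rw [Matrix.toEuclideanCLM_toLp, show schFinSec v n *ᵥ x = 0 from hx] at h
    simpa using h
  refine ⟨hunit, ContinuousLinearMap.opNorm_le_bound _ (by linarith) fun x => ?_⟩
  have h := hest (Matrix.toEuclideanCLM (𝕜 := ℂ) (schFinSec v n)⁻¹ x)
  rw [← mul_apply_eq_comp, ← map_mul,
    Matrix.mul_nonsing_inv _ ((Matrix.isUnit_iff_isUnit_det _).1 hunit), map_one,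
    one_apply_eq_self] at h
  nlinarith [norm_nonneg x]
end
end

section
/- Let K ∈ ℕ with 1 ≤ K ≤ 8, let λ ∈ ℚ, and let v : ℤ → ℝ be a K-periodic potential taking only the values 0 and λ (i.e. for every n ∈ ℤ, v(n) = 0 or v(n) = λ). If the discrete Schrödinger operator H on ℓ²(ℤ) with potential v is bijective, then the finite section method is applicable to H, i.e. the finite sections (Hₙ) are stable. -/
/-!
Write `L x k = x (k + 1) + x (k - 1) + v k * x k` for the formal difference operator (`schOp`).
By the open mapping theorem a bijective `H` is bounded below, so `‖x‖² ≤ ν ‖L x‖²` for finitely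
supported `x` (`exists_bddBelow`).

For `x` supported in `[-n, n]`, the sequence `L x` consists of the vector `H_n x` and the two
extra entries `x (-n)`, `x n` at the positions `∓(n + 1)`. Stability therefore follows once
`|x (-n)|` and `|x n|` are bounded by a constant times `‖H_n x‖`. If `L u = 0`, Green's identity
(`green`) reads
`∑ (L x) k * u k = -x n * u (n + 1) - x (-n) * u (-n - 1)`, the sum being over `[-n, n]`.
A zero-free `u` decaying exponentially at `+∞` bounds `|x (-n)|` by `C ‖H_n x‖` plus a small
multiple of `|x n|`; a solution decaying at `-∞` does the converse, and both bounds combine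
(`boundary_le`, `schFinSec_bddBelow`).

These solutions come from Floquet theory. The monodromy matrix has determinant one, so there are
solutions `u (k + K) = s * u k` and `w (k + K) = s⁻¹ * w k` (`exists_floquet`). Here `|s| ≠ 1`,
since otherwise truncations of `u` violate the lower bound (`multiplier_norm_ne_one`).

Zeros are excluded by arithmetic (`floquet_ne_zero`). If `u j = 0`, then `u` is a multiple of the
solution `p` with `p j = 0`, `p (j + 1) = 1`, and `p (j + K) = 0`,
`s = p (j + K + 1) = -p (j + K - 1)`. The numbers `p (j + i)` are integer polynomials in `λ`
depending only on a word in `{0, λ}` of length at most `7`. For each of these words, the candidates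
provided by the rational root theorem show that `p (j + K) = 0` with `λ` rational forces
`p (j + K - 1) = ±1` (`wordTest_seven`, `sq_eq_one_of_wordTest`), contradicting `|s| ≠ 1`.
-/


noncomputable section

open Matrix

/-! ### Rational roots of integer polynomials given by coefficient lists -/

/-- Evaluation at `x` of the integer polynomial with coefficient list `l`, constant term first. -/
def polyEv : List ℤ → ℚ → ℚ
  | [], _ => 0
  | c :: l, x => c + x * polyEv l x

/-- Sum of two polynomials given by coefficient lists. -/
def polyAdd : List ℤ → List ℤ → List ℤ
  | [], m => m
  | l, [] => l
  | a :: l, b :: m => (a + b) :: polyAdd l m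

/-- Negation of a polynomial given by its coefficient list. -/
def polyNeg (l : List ℤ) : List ℤ := l.map fun c => -c

/-- Division by the largest possible power of `X`. -/
def polyStrip : List ℤ → List ℤ
  | [] => []
  | c :: l => if c = 0 then polyStrip l else c :: l

theorem polyEv_add (x : ℚ) : ∀ l m : List ℤ, polyEv (polyAdd l m) x = polyEv l x + polyEv m x
  | [], m => by simp [polyAdd, polyEv]
  | a :: l, [] => by simp [polyAdd, polyEv]
  | a :: l, b :: m => by
    simp only [polyAdd, polyEv, polyEv_add x l m]; push_cast; ring

theorem polyEv_neg (x : ℚ) (l : List ℤ) : polyEv (polyNeg l) x = -polyEv l x := by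
  induction l with
  | nil => simp [polyNeg, polyEv]
  | cons c l ih =>
    simp only [polyNeg, polyEv, List.map_cons] at ih ⊢
    rw [ih]; push_cast; ring

theorem polyEv_strip {x : ℚ} (hx : x ≠ 0) {l : List ℤ} (h : polyEv l x = 0) :
    polyEv (polyStrip l) x = 0 := by
  induction l with
  | nil => simp [polyStrip, polyEv]
  | cons c l ih =>
    by_cases hc : c = 0
    · simp only [polyStrip, hc, if_true]
      apply ih
      simpa [polyEv, hc, hx] using h
    · simpa [polyStrip, hc] using h

theorem polyEv_append (x : ℚ) (l : List ℤ) (c : ℤ) :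
    polyEv (l ++ [c]) x = polyEv l x + c * x ^ l.length := by
  induction l with
  | nil => simp [polyEv]
  | cons a l ih => simp only [List.cons_append, polyEv, ih, List.length_cons]; ring

theorem polyEv_clear_den (x : ℚ) (l : List ℤ) :
    ∃ m : ℤ, polyEv l x * (x.den : ℚ) ^ l.length = m * x.den := by
  induction l with
  | nil => exact ⟨0, by simp [polyEv]⟩
  | cons c l ih =>
    obtain ⟨m, hm⟩ := ih
    refine ⟨c * (x.den : ℤ) ^ l.length + x.num * m, ?_⟩
    have h := Rat.mul_den_eq_num x
    simp only [polyEv, List.length_cons]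
    push_cast
    linear_combination (x.num : ℚ) * hm + polyEv l x * (x.den : ℚ) ^ l.length * h

/-- Rational root theorem: the numerator of a root divides the constant coefficient. -/
theorem num_dvd_of_polyEv {x : ℚ} {c : ℤ} {l : List ℤ} (h : polyEv (c :: l) x = 0) :
    x.num ∣ c := by
  obtain ⟨m, hm⟩ := polyEv_clear_den x l
  have hd := Rat.mul_den_eq_num x
  have h1 : (x.den : ℤ) ^ (l.length + 1) * c = x.num * (-(m * x.den)) := by
    have : (x.den : ℚ) ^ (l.length + 1) * c = x.num * (-(m * x.den)) := by
      simp only [polyEv] at h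
      linear_combination (x.den : ℚ) ^ (l.length + 1) * h - (x.num : ℚ) * hm
        - polyEv l x * (x.den : ℚ) ^ l.length * hd
    exact_mod_cast this
  have hcop : IsCoprime x.num ((x.den : ℤ) ^ (l.length + 1)) :=
    (Int.isCoprime_iff_gcd_eq_one.2 (by simpa [Int.gcd] using x.reduced)).pow_right
  exact hcop.dvd_of_dvd_mul_left ⟨_, h1⟩

/-- Rational root theorem: the denominator of a root divides the leading coefficient. -/
theorem den_dvd_of_polyEv {x : ℚ} {c : ℤ} {l : List ℤ} (h : polyEv (l ++ [c]) x = 0) :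
    (x.den : ℤ) ∣ c := by
  obtain ⟨m, hm⟩ := polyEv_clear_den x l
  have hd := Rat.mul_den_eq_num x
  have h1 : x.num ^ l.length * c = x.den * (-m) := by
    have : (x.num : ℚ) ^ l.length * c = x.den * (-m) := by
      rw [polyEv_append] at h
      rw [← hd, mul_pow]
      linear_combination (x.den : ℚ) ^ l.length * h - hm
    exact_mod_cast this
  have hcop : IsCoprime (x.den : ℤ) (x.num ^ l.length) :=
    (Int.isCoprime_iff_gcd_eq_one.2 (by simpa [Int.gcd] using x.reduced)).symm.pow_right
  exact hcop.dvd_of_dvd_mul_left ⟨_, h1⟩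

/-- A sufficient test for `A ^ 2 = 1` at every rational root of `B`: all candidates allowed by the
rational root theorem are tried. -/
def rootTest (A B : List ℤ) : Prop :=
  match polyStrip B with
  | [] => A = [1] ∨ A = [-1]
  | t :: l => (t :: l).getLast (by simp) ≠ 0 ∧ t ≠ 0 ∧
      ∀ a ∈ Finset.Icc (-|t|) |t|, ∀ b ∈ Finset.Icc 1 |(t :: l).getLast (by simp)|,
        polyEv B ((a : ℚ) / b) = 0 → polyEv A ((a : ℚ) / b) ^ 2 = 1

instance (A B : List ℤ) : Decidable (rootTest A B) := by
  unfold rootTest; split <;> infer_instance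

theorem sq_eq_one_of_rootTest {A B : List ℤ} (h : rootTest A B) {x : ℚ} (hx : polyEv B x = 0) :
    polyEv A x ^ 2 = 1 := by
  unfold rootTest at h
  split at h
  · rcases h with rfl | rfl <;> simp [polyEv]
  · rename_i t l heq
    obtain ⟨hl, ht, h⟩ := h
    have key := h x.num ?_ x.den ?_
    · rw [Int.cast_natCast, Rat.num_div_den] at key
      exact key hx
    · rw [Finset.mem_Icc, ← abs_le]
      by_cases h0 : x = 0
      · simp [h0]
      have := polyEv_strip h0 hx
      rw [heq] at this
      exact Int.le_of_dvd (abs_pos.2 ht) ((abs_dvd_abs _ _).2 (num_dvd_of_polyEv this))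
    · have hpos := x.den_pos
      rw [Finset.mem_Icc]
      refine ⟨by exact_mod_cast hpos, ?_⟩
      by_cases h0 : x = 0
      · have := abs_pos.2 hl
        simp only [h0, Rat.den_zero]
        exact_mod_cast this
      have := polyEv_strip h0 hx
      rw [heq, ← List.dropLast_append_getLast (l := t :: l) (by simp)] at this
      exact Int.le_of_dvd (abs_pos.2 hl) ((dvd_abs _ _).2 (den_dvd_of_polyEv this))

/-! ### Words in `{0, λ}` of length at most seven -/

/-- `wordTest n A B` runs `rootTest` on all pairs of consecutive terms reached from the
consecutive terms `A`, `B` of a solution of `p (i + 2) = -a i * p (i + 1) - p i` after at most `n`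
further steps with `a i ∈ {0, X}`, including the initial pair itself. -/
def wordTest : ℕ → List ℤ → List ℤ → Prop
  | 0, A, B => rootTest A B
  | n + 1, A, B => rootTest A B ∧ wordTest n B (polyNeg A) ∧
      wordTest n B (polyNeg (polyAdd (0 :: B) A))

instance decWordTest : ∀ (n : ℕ) (A B : List ℤ), Decidable (wordTest n A B)
  | 0, A, B => inferInstanceAs (Decidable (rootTest A B))
  | n + 1, A, B =>
    have := decWordTest n B (polyNeg A)
    have := decWordTest n B (polyNeg (polyAdd (0 :: B) A))
    inferInstanceAs (Decidable (rootTest A B ∧ _ ∧ _))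

/-- All words of length at most seven, starting from `p 0 = 0`, `p 1 = 1`, pass the test. -/
theorem wordTest_seven : wordTest 7 [] [1] := by
  decide +kernel

/-- Soundness of `wordTest`: at every zero of a solution within reach, the preceding value is
`±1`. -/
theorem sq_eq_one_of_wordTest (lam : ℚ) : ∀ (n : ℕ) (A B : List ℤ) (a w : ℕ → ℂ),
    wordTest n A B → (∀ i, a i = 0 ∨ a i = lam) → w 0 = (polyEv A lam : ℚ) →
    w 1 = (polyEv B lam : ℚ) → (∀ i, w (i + 2) = -a i * w (i + 1) - w i) →
    ∀ j ≤ n, w (j + 1) = 0 → w j ^ 2 = 1 := by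
  have base : ∀ (A B : List ℤ) (w : ℕ → ℂ), rootTest A B → w 0 = (polyEv A lam : ℚ) →
      w 1 = (polyEv B lam : ℚ) → w 1 = 0 → w 0 ^ 2 = 1 := by
    intro A B w ht h0 h1 hz
    rw [h1] at hz
    rw [h0]
    exact_mod_cast sq_eq_one_of_rootTest ht (by exact_mod_cast hz)
  intro n
  induction n with
  | zero =>
    intro A B a w ht ha h0 h1 hr j hj hz
    obtain rfl : j = 0 := by omega
    exact base A B w ht h0 h1 hz
  | succ n ih =>
    intro A B a w ht ha h0 h1 hr j hj hz
    obtain ⟨ht0, ht1, ht2⟩ := ht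
    cases j with
    | zero => exact base A B w ht0 h0 h1 hz
    | succ j =>
      have h2 := hr 0
      rcases ha 0 with h | h
      · refine ih B (polyNeg A) (fun i => a (i + 1)) (fun i => w (i + 1)) ht1 (fun i => ha _) h1
          ?_ (fun i => hr (i + 1)) j (by omega) hz
        simp only [zero_add] at h2 ⊢
        rw [h2, h, h0, polyEv_neg]; push_cast; ring
      · refine ih B (polyNeg (polyAdd (0 :: B) A)) (fun i => a (i + 1)) (fun i => w (i + 1)) ht2
          (fun i => ha _) h1 ?_ (fun i => hr (i + 1)) j (by omega) hz
        simp only [zero_add] at h2 ⊢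
        rw [h2, h, h0, h1, polyEv_neg, polyEv_add, polyEv]; push_cast; ring

/-! ### Solutions of the difference equation and Floquet theory -/

/-- The discrete Schrödinger operator with potential `v` on arbitrary sequences `ℤ → ℂ`. -/
def schOp (v : ℤ → ℝ) (x : ℤ → ℂ) (k : ℤ) : ℂ := x (k + 1) + x (k - 1) + (v k : ℂ) * x k

/-- Solutions of the second-order difference equation at energy zero. -/
def IsSol (v : ℤ → ℝ) (u : ℤ → ℂ) : Prop := ∀ k, schOp v u k = 0

theorem IsSol.next {v : ℤ → ℝ} {u : ℤ → ℂ} (h : IsSol v u) (k : ℤ) :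
    u (k + 2) = -(v (k + 1) : ℂ) * u (k + 1) - u k := by
  have := h (k + 1)
  simp only [schOp] at this
  rw [show k + 1 + 1 = k + 2 by ring, show k + 1 - 1 = k by ring] at this
  linear_combination this

/-- A solution with two consecutive zeros vanishes. -/
theorem IsSol.eq_zero {v : ℤ → ℝ} {u : ℤ → ℂ} (h : IsSol v u) {j : ℤ} (h0 : u j = 0)
    (h1 : u (j + 1) = 0) (k : ℤ) : u k = 0 := by
  have fwd : ∀ n : ℕ, u (j + n) = 0 ∧ u (j + n + 1) = 0 := by
    intro n
    induction n with
    | zero => simpa using ⟨h0, h1⟩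
    | succ n ih =>
      have := h.next (j + n)
      push_cast
      rw [← add_assoc, add_assoc (j + (n : ℤ)) 1 1]
      refine ⟨ih.2, ?_⟩
      norm_num
      rw [this, ih.1, ih.2]; simp
  have bwd : ∀ n : ℕ, u (j - n) = 0 ∧ u (j - n + 1) = 0 := by
    intro n
    induction n with
    | zero => simpa using ⟨h0, h1⟩
    | succ n ih =>
      have := h.next (j - n - 1)
      rw [show j - (n : ℤ) - 1 + 2 = j - n + 1 by ring, show j - (n : ℤ) - 1 + 1 = j - n by ring,
        ih.1, ih.2] at this
      push_cast
      rw [show j - ((n : ℤ) + 1) = j - n - 1 by ring, show j - (n : ℤ) - 1 + 1 = j - n by ring]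
      refine ⟨?_, ih.1⟩
      linear_combination this
  rcases le_total j k with hk | hk
  · have := (fwd (k - j).toNat).1
    rwa [Int.toNat_of_nonneg (by omega), show j + (k - j) = k by ring] at this
  · have := (bwd (j - k).toNat).1
    rwa [Int.toNat_of_nonneg (by omega), show j - (j - k) = k by ring] at this

/-- Existence for the initial value problem on `ℕ`. -/
theorem exists_nat_rec (a : ℕ → ℂ) (x y : ℂ) :
    ∃ g : ℕ → ℂ, g 0 = x ∧ g 1 = y ∧ ∀ n, g (n + 2) = -a n * g (n + 1) - g n := by
  let F : ℕ → ℂ × ℂ := fun n => Nat.rec (x, y) (fun n p => (p.2, -a n * p.2 - p.1)) n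
  exact ⟨fun n => (F n).1, rfl, rfl, fun n => rfl⟩

theorem exists_isSol (v : ℤ → ℝ) (x y : ℂ) : ∃ u, IsSol v u ∧ u 0 = x ∧ u 1 = y := by
  obtain ⟨g, g0, g1, hg⟩ := exists_nat_rec (fun n => (v (n + 1) : ℂ)) x y
  obtain ⟨h, h0, h1, hh⟩ := exists_nat_rec (fun n => (v (-n) : ℂ)) y x
  -- `h n` is the value at `1 - n`
  have hov : h 1 = g 0 := by rw [h1, g0]
  have hov' : h 0 = g 1 := by rw [h0, g1]
  refine ⟨fun k => if 0 ≤ k then g k.toNat else h (1 - k).toNat, ?_, by simp [g0], by simp [g1]⟩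
  intro k
  simp only [schOp]
  rcases lt_trichotomy k 0 with hk | rfl | hk
  · obtain ⟨n, rfl⟩ : ∃ n : ℕ, k = -(n + 1 : ℕ) := ⟨(-k - 1).toNat, by omega⟩
    have e1 : (1 - (-((n + 1 : ℕ) : ℤ) - 1)).toNat = n + 1 + 2 := by omega
    have e2 : (1 - (-((n + 1 : ℕ) : ℤ))).toNat = n + 1 + 1 := by omega
    have e3 : (1 - (-((n + 1 : ℕ) : ℤ) + 1)).toNat = n + 1 := by omega
    rw [if_neg (show ¬ (0 : ℤ) ≤ -((n + 1 : ℕ) : ℤ) - 1 by omega),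
      if_neg (show ¬ (0 : ℤ) ≤ -((n + 1 : ℕ) : ℤ) by omega), e1, e2, e3, hh (n + 1)]
    split_ifs with h3
    · obtain rfl : n = 0 := by omega
      simp [hov]
    · ring
  · have := hh 0
    simp only [zero_add] at this
    simp [this, hov, hov']
  · obtain ⟨n, rfl⟩ : ∃ n : ℕ, k = n + 1 := ⟨(k - 1).toNat, by omega⟩
    have e1 : ((n : ℤ) + 1 + 1).toNat = n + 2 := by omega
    have e2 : ((n : ℤ) + 1).toNat = n + 1 := by omega
    have e3 : ((n : ℤ) + 1 - 1).toNat = n := by omega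
    rw [if_pos (by omega), if_pos (by omega), if_pos (by omega), e1, e2, e3, hg n]
    ring

/-- The Wronskian of two solutions does not depend on the position. -/
theorem wronskian_const {v : ℤ → ℝ} {c s : ℤ → ℂ} (hc : IsSol v c) (hs : IsSol v s) (n : ℕ) :
    c n * s (n + 1) - c (n + 1) * s n = c 0 * s 1 - c 1 * s 0 := by
  induction n with
  | zero => simp
  | succ n ih =>
    have h1 := hc.next n
    have h2 := hs.next n
    push_cast
    rw [show (n : ℤ) + 1 + 1 = n + 2 by ring, h1, h2]
    linear_combination ih

/-- Floquet: a pair of solutions with reciprocal multipliers, which are the eigenvalues of the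
monodromy matrix. -/
theorem exists_floquet {v : ℤ → ℝ} {K : ℕ} (hper : ∀ n : ℤ, v (n + (K : ℤ)) = v n) :
    ∃ s : ℂ, s ≠ 0 ∧ (∃ u, IsSol v u ∧ u ≠ 0 ∧ ∀ k, u (k + K) = s * u k) ∧
      ∃ u, IsSol v u ∧ u ≠ 0 ∧ ∀ k, u (k + K) = s⁻¹ * u k := by
  obtain ⟨c, hc, c0, c1⟩ := exists_isSol v 1 0
  obtain ⟨d, hd, d0, d1⟩ := exists_isSol v 0 1
  have hW := wronskian_const hc hd K
  rw [c0, c1, d0, d1] at hW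
  obtain ⟨s, hs⟩ : ∃ s : ℂ, (1 : ℂ) * (s * s) + -(c K + d (K + 1)) * s + 1 = 0 := by
    obtain ⟨r, hr⟩ := IsAlgClosed.exists_eq_mul_self (discrim (1 : ℂ) (-(c K + d (K + 1))) 1)
    exact exists_quadratic_eq_zero one_ne_zero ⟨r, hr⟩
  have hs0 : s ≠ 0 := by rintro rfl; simp at hs
  -- every root of the characteristic polynomial of the monodromy matrix is a multiplier
  have main : ∀ s : ℂ, (1 : ℂ) * (s * s) + -(c K + d (K + 1)) * s + 1 = 0 →
      ∃ u, IsSol v u ∧ u ≠ 0 ∧ ∀ k, u (k + K) = s * u k := by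
    intro s hs
    have hdet : (!![c K - s, d K; c (K + 1), d (K + 1) - s]).det = 0 := by
      rw [Matrix.det_fin_two_of]; linear_combination hs + hW
    obtain ⟨z, hz, hz0⟩ := Matrix.exists_mulVec_eq_zero_iff.2 hdet
    have e0 := congrFun hz0 0
    have e1 := congrFun hz0 1
    simp [Matrix.mulVec, dotProduct, Fin.sum_univ_two] at e0 e1
    have hu : IsSol v (fun k => z 0 * c k + z 1 * d k) := by
      intro k
      have h1 := hc k
      have h2 := hd k
      simp only [schOp] at h1 h2 ⊢
      linear_combination z 0 * h1 + z 1 * h2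
    refine ⟨_, hu, ?_, ?_⟩
    · intro h
      apply hz
      have h0 := congrFun h 0
      have h1 := congrFun h 1
      simp [c0, c1, d0, d1] at h0 h1
      ext i; fin_cases i <;> simp [h0, h1]
    · have hdiff : IsSol v (fun k => (z 0 * c (k + K) + z 1 * d (k + K)) -
          s * (z 0 * c k + z 1 * d k)) := by
        intro k
        have h1 := hu k
        have h2 := hu (k + K)
        simp only [schOp, hper] at h1 h2 ⊢
        rw [show k + 1 + (K : ℤ) = k + K + 1 by ring, show k - 1 + (K : ℤ) = k + K - 1 by ring]
        linear_combination h2 - s * h1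
      intro k
      have := hdiff.eq_zero (j := 0) (by simp only [c0, d0, zero_add]; linear_combination e0)
        (by simp only [zero_add, c1, d1]; rw [add_comm 1 (K : ℤ)]; linear_combination e1) k
      exact sub_eq_zero.1 this
  refine ⟨s, hs0, main s hs, main s⁻¹ ?_⟩
  field_simp
  linear_combination hs

/-- The algebraic core: a solution with a multiplier off the unit circle has no zeros. -/
theorem floquet_ne_zero {v : ℤ → ℝ} {K : ℕ} (hK1 : 1 ≤ K) (hK8 : K ≤ 8) {lam : ℚ}
    (hval : ∀ n : ℤ, v n = 0 ∨ v n = (lam : ℝ)) {u : ℤ → ℂ} (hu : IsSol v u) (hu0 : u ≠ 0)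
    {s : ℂ} (hs : ∀ k, u (k + K) = s * u k) (hs1 : ‖s‖ ≠ 1) (j : ℤ) : u j ≠ 0 := by
  intro hj
  have hj1 : u (j + 1) ≠ 0 := fun h => hu0 (funext (hu.eq_zero hj h))
  obtain ⟨k, rfl⟩ : ∃ k, K = k + 1 := ⟨K - 1, by omega⟩
  have hK : u (j + (k + 1 : ℕ)) = 0 := by rw [hs, hj, mul_zero]
  have h1 := sq_eq_one_of_wordTest lam 7 [] [1] (fun i => (v (j + i + 1) : ℂ))
    (fun i => u (j + i) / u (j + 1)) wordTest_seven
    (fun i => by rcases hval (j + i + 1) with h | h <;> simp [h])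
    (by simp [polyEv, hj]) (by simp [polyEv, hj1])
    (fun i => by
      have := hu.next (j + i)
      push_cast
      rw [← add_assoc, ← add_assoc, this]
      ring) k (by omega) (by simp only [hK, zero_div])
  have h2 := hu.next (j + k)
  have h3 := hs (j + 1)
  push_cast at hK h3
  rw [add_assoc j (k : ℤ) 1, hK, show j + (k : ℤ) + 2 = j + 1 + (k + 1) by ring, h3] at h2
  have h4 : u (j + k) / u (j + 1) = -s := by
    rw [div_eq_iff hj1]; linear_combination h2
  simp only [h4] at h1
  apply hs1
  have h5 : ‖s‖ ^ 2 = 1 := by rw [← norm_pow, ← neg_sq, h1, norm_one]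
  exact (pow_eq_one_iff_of_nonneg (norm_nonneg _) two_ne_zero).1 h5

/-! ### The lower bound on the line and its consequence for multipliers -/

/-- Bijectivity of `H` as an a priori bound on finitely supported sequences. -/
theorem exists_bddBelow {v : ℤ → ℝ} (H : lp (fun _ : ℤ => ℂ) 2 →L[ℂ] lp (fun _ : ℤ => ℂ) 2)
    (hH : ∀ x : lp (fun _ : ℤ => ℂ) 2, ∀ n : ℤ,
      H x n = x (n + 1) + x (n - 1) + (v n : ℂ) * x n)
    (hbij : Function.Bijective H) :
    ∃ ν : ℝ, 0 < ν ∧ ∀ (x : ℤ → ℂ) (S T : Finset ℤ), (∀ k ∉ S, x k = 0) →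
      (∀ k ∉ T, schOp v x k = 0) →
      ∑ k ∈ S, ‖x k‖ ^ 2 ≤ ν * ∑ k ∈ T, ‖schOp v x k‖ ^ 2 := by
  let e := ContinuousLinearEquiv.ofBijective H (LinearMap.ker_eq_bot.2 hbij.1)
    (LinearMap.range_eq_top.2 hbij.2)
  have nsq : ∀ (y : lp (fun _ : ℤ => ℂ) 2) (S : Finset ℤ), (∀ k ∉ S, y k = 0) →
      ‖y‖ ^ 2 = ∑ k ∈ S, ‖y k‖ ^ 2 := by
    intro y S hS
    have h := lp.norm_rpow_eq_tsum (p := 2) (by norm_num) y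
    simp only [ENNReal.toReal_ofNat, Real.rpow_ofNat] at h
    rw [h]
    exact tsum_eq_sum fun k hk => by simp [hS k hk]
  obtain ⟨c, hc⟩ : ∃ c : ℝ, ‖(e.symm : lp (fun _ : ℤ => ℂ) 2 →L[ℂ] lp (fun _ : ℤ => ℂ) 2)‖ = c :=
    ⟨_, rfl⟩
  refine ⟨c ^ 2 + 1, by positivity, fun x S T hS hT => ?_⟩
  have hx : Memℓp x 2 := by
    refine memℓp_gen (summable_of_ne_finset_zero (s := S) fun k hk => ?_)
    simp [hS k hk]
  let X : lp (fun _ : ℤ => ℂ) 2 := ⟨x, hx⟩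
  have hX : ∀ k, X k = x k := fun k => rfl
  have hHX : ∀ k, H X k = schOp v x k := fun k => hH X k
  have h1 : ‖X‖ ≤ c * ‖H X‖ := by
    have h := (e.symm : lp (fun _ : ℤ => ℂ) 2 →L[ℂ] lp (fun _ : ℤ => ℂ) 2).le_opNorm (H X)
    have h2 : e.symm (H X) = X := e.symm_apply_apply X
    rw [hc] at h
    simpa [h2] using h
  have h2 := nsq X S hS
  have h3 := nsq (H X) T (fun k hk => by rw [hHX, hT k hk])
  simp only [hX, hHX] at h2 h3
  rw [← h2, ← h3]
  calc ‖X‖ ^ 2 ≤ (c * ‖H X‖) ^ 2 := by gcongr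
    _ ≤ (c ^ 2 + 1) * ‖H X‖ ^ 2 := by nlinarith [sq_nonneg ‖H X‖]

theorem exists_bounds_of_periodic {K : ℕ} (hK : 1 ≤ K) {f : ℤ → ℝ} (hf : ∀ k, f (k + K) = f k) :
    ∃ a b : ℤ, ∀ k, f a ≤ f k ∧ f k ≤ f b := by
  have hper : Function.Periodic f (K : ℤ) := hf
  have hK' : (0 : ℤ) < K := by omega
  have hne : (Finset.Ico (0 : ℤ) K).Nonempty := ⟨0, by simp; omega⟩
  obtain ⟨a, -, ha⟩ := Finset.exists_min_image _ f hne
  obtain ⟨b, -, hb⟩ := Finset.exists_max_image _ f hne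
  refine ⟨a, b, fun k => ?_⟩
  obtain ⟨y, hy, hky⟩ := hper.exists_mem_Ico₀ hK' k
  rw [hky]
  have : y ∈ Finset.Ico (0 : ℤ) K := by simpa using hy
  exact ⟨ha y this, hb y this⟩

/-- A multiplier of modulus one would yield a bounded non-decaying solution, whose truncations
violate the a priori bound. -/
theorem multiplier_norm_ne_one {v : ℤ → ℝ} {K : ℕ} (hK1 : 1 ≤ K)
    (hper : ∀ n : ℤ, v (n + (K : ℤ)) = v n) {ν : ℝ}
    (hν : ∀ (x : ℤ → ℂ) (S T : Finset ℤ), (∀ k ∉ S, x k = 0) → (∀ k ∉ T, schOp v x k = 0) →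
      ∑ k ∈ S, ‖x k‖ ^ 2 ≤ ν * ∑ k ∈ T, ‖schOp v x k‖ ^ 2) (hν0 : 0 < ν)
    {u : ℤ → ℂ} (hu : IsSol v u) (hu0 : u ≠ 0)
    {s : ℂ} (hs : ∀ k, u (k + K) = s * u k) : ‖s‖ ≠ 1 := by
  intro hs1
  have hnp : ∀ k, ‖u (k + K)‖ = ‖u k‖ := fun k => by rw [hs, norm_mul, hs1, one_mul]
  obtain ⟨j, hj⟩ : ∃ j, u j ≠ 0 := Function.ne_iff.1 hu0
  obtain ⟨_, b, hb⟩ := exists_bounds_of_periodic hK1 (f := fun k => ‖u k‖) hnp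
  obtain ⟨_, c, hc⟩ := exists_bounds_of_periodic hK1 (f := fun k => |v k|)
    (fun k => by simp only [hper])
  have hnm : ∀ i : ℕ, ‖u (j + i * K)‖ = ‖u j‖ := by
    intro i
    induction i with
    | zero => simp
    | succ i ih => push_cast; rw [add_mul, one_mul, ← add_assoc, hnp, ih]
  set B := ‖u b‖ with hB
  set V := |v c| with hV
  have hB0 : 0 ≤ B := norm_nonneg _
  have hV0 : 0 ≤ V := abs_nonneg _
  obtain ⟨m, hm⟩ := exists_nat_gt (ν * (4 * ((2 + V) * B) ^ 2) / ‖u j‖ ^ 2)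
  have hj2 : 0 < ‖u j‖ ^ 2 := by have := norm_pos_iff.2 hj; positivity
  rw [div_lt_iff₀ hj2] at hm
  have hm0 : 0 < m := by
    rcases Nat.eq_zero_or_pos m with rfl | h
    · have : 0 ≤ ν * (4 * ((2 + V) * B) ^ 2) := by positivity
      simp at hm; linarith
    · exact h
  have hN : 0 < (m : ℤ) * K := by positivity
  set N : ℤ := m * K with hNdef
  let x : ℤ → ℂ := fun k => if j ≤ k ∧ k < j + N then u k else 0
  have hxB : ∀ k, ‖x k‖ ≤ B := by
    intro k
    simp only [x]; split_ifs
    · exact (hb k).2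
    · simpa using hB0
  have hopB : ∀ k, ‖schOp v x k‖ ≤ (2 + V) * B := by
    intro k
    calc ‖schOp v x k‖ ≤ ‖x (k + 1)‖ + ‖x (k - 1)‖ + ‖(v k : ℂ) * x k‖ := norm_add₃_le
      _ ≤ B + B + V * B := by
        rw [norm_mul, Complex.norm_real]
        gcongr
        · exact hxB _
        · exact hxB _
        · exact (hc k).2
        · exact hxB _
      _ = _ := by ring
  have h := hν x (Finset.Ico j (j + N)) {j - 1, j, j + N - 1, j + N}
    (fun k hk => by
      simp only [Finset.mem_Ico] at hk
      simp only [x]; rw [if_neg hk])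
    (fun k hk => by
      simp only [Finset.mem_insert, Finset.mem_singleton, not_or] at hk
      have hk' := hu k
      simp only [schOp, x] at hk' ⊢
      by_cases hin : j ≤ k ∧ k < j + N
      · rw [if_pos (by omega), if_pos (by omega), if_pos hin, hk']
      · rw [if_neg (by omega), if_neg (by omega), if_neg hin]; simp)
  have hT : ∑ k ∈ ({j - 1, j, j + N - 1, j + N} : Finset ℤ), ‖schOp v x k‖ ^ 2
      ≤ 4 * ((2 + V) * B) ^ 2 := by
    calc _ ≤ (({j - 1, j, j + N - 1, j + N} : Finset ℤ).card : ℝ) * ((2 + V) * B) ^ 2 := by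
          rw [← nsmul_eq_mul]
          exact Finset.sum_le_card_nsmul _ _ _ fun k _ => by gcongr; exact hopB k
      _ ≤ 4 * ((2 + V) * B) ^ 2 := by
          gcongr
          exact_mod_cast Finset.card_le_four
  have hS : m * ‖u j‖ ^ 2 ≤ ∑ k ∈ Finset.Ico j (j + N), ‖x k‖ ^ 2 := by
    have hinj : Function.Injective fun i : ℕ => j + (i : ℤ) * K := by
      intro a b hab
      have : K ≠ 0 := by omega
      simpa [this] using hab
    calc m * ‖u j‖ ^ 2 = ∑ i ∈ Finset.range m, ‖x (j + i * K)‖ ^ 2 := by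
          rw [Finset.sum_congr rfl (g := fun _ => ‖u j‖ ^ 2)]
          · simp
          · intro i hi
            have hi' : (i : ℤ) < m := by exact_mod_cast Finset.mem_range.1 hi
            have h1 : (i : ℤ) * K < N := by
              rw [hNdef]; exact mul_lt_mul_of_pos_right hi' (by omega)
            have h2 : 0 ≤ (i : ℤ) * K := by positivity
            simp only [x]
            rw [if_pos (by omega), hnm]
      _ = ∑ k ∈ (Finset.range m).image fun i : ℕ => j + (i : ℤ) * K, ‖x k‖ ^ 2 := by
          rw [Finset.sum_image hinj.injOn]
      _ ≤ _ := by
          refine Finset.sum_le_sum_of_subset_of_nonneg ?_ fun _ _ _ => by positivity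
          intro k hk
          obtain ⟨i, hi, rfl⟩ := Finset.mem_image.1 hk
          have hi' : (i : ℤ) < m := by exact_mod_cast Finset.mem_range.1 hi
          have h1 : (i : ℤ) * K < N := by
            rw [hNdef]; exact mul_lt_mul_of_pos_right hi' (by omega)
          have h2 : 0 ≤ (i : ℤ) * K := by positivity
          simp only [Finset.mem_Ico]; omega
  have := mul_le_mul_of_nonneg_left hT hν0.le
  linarith

/-- A zero-free sequence with multiplier `s` is comparable to `ρ ^ k`, where `ρ ^ K = ‖s‖`: the
quotient `‖u k‖ / ρ ^ k` is positive and periodic. -/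
theorem floquet_ratio {K : ℕ} (hK1 : 1 ≤ K) {u : ℤ → ℂ} (hne : ∀ k, u k ≠ 0)
    {s : ℂ} (hs : ∀ k, u (k + K) = s * u k) (hs0 : s ≠ 0) :
    ∃ D > 0, ∀ a b, ‖u b‖ ≤ D * (‖s‖ ^ (1 / K : ℝ)) ^ (b - a) * ‖u a‖ := by
  set ρ : ℝ := ‖s‖ ^ (1 / K : ℝ) with hρ
  have hρ0 : 0 < ρ := Real.rpow_pos_of_pos (norm_pos_iff.2 hs0) _
  have hρK : ρ ^ K = ‖s‖ := by
    rw [hρ, one_div]; exact Real.rpow_inv_natCast_pow (norm_nonneg _) (by omega)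
  obtain ⟨p, q, hpq⟩ := exists_bounds_of_periodic hK1 (f := fun k => ‖u k‖ / ρ ^ k) (fun k => by
    have : ‖s‖ ≠ 0 := norm_ne_zero_iff.2 hs0
    rw [hs, norm_mul, zpow_add₀ hρ0.ne', zpow_natCast, hρK]
    field_simp)
  have hpos : ∀ k, 0 < ‖u k‖ / ρ ^ k := fun k =>
    div_pos (norm_pos_iff.2 (hne k)) (zpow_pos hρ0 _)
  refine ⟨(‖u q‖ / ρ ^ q) / (‖u p‖ / ρ ^ p), div_pos (hpos q) (hpos p), fun a b => ?_⟩
  have h1 : ‖u b‖ ≤ (‖u q‖ / ρ ^ q) * ρ ^ b := (div_le_iff₀ (zpow_pos hρ0 _)).1 (hpq b).2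
  have h2 : (‖u p‖ / ρ ^ p) * ρ ^ a ≤ ‖u a‖ := (le_div_iff₀ (zpow_pos hρ0 _)).1 (hpq a).1
  have hq := hpos q
  have hp := hpos p
  set Q := ‖u q‖ / ρ ^ q
  set P := ‖u p‖ / ρ ^ p
  have ha := zpow_pos hρ0 a
  have hb := zpow_pos hρ0 b
  rw [zpow_sub₀ hρ0.ne']
  calc ‖u b‖ ≤ Q * ρ ^ b := h1
    _ = Q / P * (ρ ^ b / ρ ^ a) * (P * ρ ^ a) := by field_simp
    _ ≤ _ := by gcongr

/-! ### Finite sections and boundary values -/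

/-- Green's identity on `[-n, n]`. -/
theorem green {v : ℤ → ℝ} {u x : ℤ → ℂ} (hu : IsSol v u) (n : ℕ) (h1 : x (n + 1) = 0)
    (h2 : x (-n - 1) = 0) :
    ∑ i ∈ Finset.range (2 * n + 1), schOp v x (i - n) * u (i - n) =
      -(x n * u (n + 1)) - x (-n) * u (-n - 1) := by
  -- the summand is the increment of the Wronskian of `x` and `u`
  let W : ℕ → ℂ := fun i => x (i - n) * u (i - n - 1) - x (i - n - 1) * u (i - n)
  have h : ∀ i : ℕ, schOp v x (i - n) * u (i - n) = W (i + 1) - W i := by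
    intro i
    have := hu (i - n)
    simp only [schOp, W] at this ⊢
    push_cast
    rw [show (i : ℤ) + 1 - n = i - n + 1 by ring, show (i : ℤ) - n + 1 - 1 = i - n by ring]
    linear_combination x (i - n) * this
  rw [Finset.sum_congr rfl fun i _ => h i, Finset.sum_range_sub]
  simp only [W]
  push_cast
  rw [show 2 * (n : ℤ) + 1 - n = n + 1 by ring, show (n : ℤ) + 1 - 1 = n by ring,
    show (0 : ℤ) - n = -n by ring, h1, h2]
  ring

theorem sum_fin_shift {M : Type*} [AddCommMonoid M] (n : ℕ) (f : ℤ → M) :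
    ∑ i : Fin (2 * n + 1), f ((i : ℤ) - n) = ∑ k ∈ Finset.Icc (-n : ℤ) n, f k := by
  rw [Fin.sum_univ_eq_sum_range (fun i : ℕ => f ((i : ℤ) - n))]
  refine Finset.sum_nbij' (fun i => (i : ℤ) - n) (fun k => (k + n).toNat) ?_ ?_ ?_ ?_ ?_
  · intro i hi; simp only [Finset.mem_range, Finset.mem_Icc] at *; omega
  · intro i hi; simp only [Finset.mem_range, Finset.mem_Icc] at *; omega
  · intro i hi; simp only [Finset.mem_range] at *; omega
  · intro i hi; simp only [Finset.mem_Icc] at *; omega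
  · intro i hi; rfl

/-- The finite section acts as `schOp` on sequences supported in `[-n, n]`; the indices
`0, …, 2 n` of the matrix correspond to the positions `-n, …, n`. -/
theorem schFinSec_mulVec_s1 (v : ℤ → ℝ) (n : ℕ) (x : ℤ → ℂ)
    (hx : ∀ k ∉ Finset.Icc (-n : ℤ) n, x k = 0) (i : Fin (2 * n + 1)) :
    (schFinSec v n *ᵥ fun j => x ((j : ℤ) - n)) i = schOp v x ((i : ℤ) - n) := by
  have hi : (i : ℤ) < 2 * n + 1 := by have := i.2; omega
  let f : ℤ → ℂ := fun k => (if (i : ℤ) - n = k then (v k : ℂ) * x k else 0) +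
    (if (i : ℤ) - n - 1 = k then x k else 0) + (if (i : ℤ) - n + 1 = k then x k else 0)
  have h : ∀ j : Fin (2 * n + 1), schFinSec v n i j * x ((j : ℤ) - n) = f ((j : ℤ) - n) := by
    intro j
    simp only [schFinSec, Matrix.of_apply, f]
    by_cases h1 : (i : ℤ) = j
    · rw [if_pos h1, if_pos (by omega), if_neg (by omega), if_neg (by omega), h1]; simp
    by_cases h2 : (i : ℤ) = j + 1
    · rw [if_neg h1, if_pos (Or.inl h2), if_neg (by omega), if_pos (by omega), if_neg (by omega)]
      simp
    by_cases h3 : (j : ℤ) = i + 1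
    · rw [if_neg h1, if_pos (Or.inr h3), if_neg (by omega), if_neg (by omega), if_pos (by omega)]
      simp
    · rw [if_neg h1, if_neg (by tauto), if_neg (by omega), if_neg (by omega), if_neg (by omega)]
      simp
  rw [Matrix.mulVec, dotProduct, Finset.sum_congr rfl fun j _ => h j, sum_fin_shift n f,
    Finset.sum_add_distrib, Finset.sum_add_distrib, Finset.sum_ite_eq, Finset.sum_ite_eq,
    Finset.sum_ite_eq, if_pos (by simp only [Finset.mem_Icc]; omega)]
  simp only [schOp]
  have e : ∀ k, (if k ∈ Finset.Icc (-n : ℤ) n then x k else 0) = x k := by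
    intro k; split_ifs with hk
    · rfl
    · rw [hx k hk]
  rw [e, e]; ring

theorem geom_window_le {ρ : ℝ} (h0 : 0 < ρ) (h1 : ρ < 1) (N : ℕ) :
    ∑ i ∈ Finset.range N, ρ ^ i ≤ (1 - ρ)⁻¹ := by
  rw [← tsum_geometric_of_lt_one h0.le h1]
  exact (summable_geometric_of_lt_one h0.le h1).sum_le_tsum _ fun _ _ => by positivity

/-- The two boundary values of `x` are controlled, up to a small multiple of each other, by
`schOp v x` on `[-n, n]`: Green's identity is applied to the solution decaying away from one of the
ends. -/
theorem boundary_le {v : ℤ → ℝ} {u : ℤ → ℂ} (hu : IsSol v u) (hne : ∀ k, u k ≠ 0)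
    {D ρ : ℝ} (hD : 0 < D) (hρ0 : 0 < ρ) (hρ1 : ρ < 1)
    (n : ℕ) (hn : D * ρ ^ (2 * n + 2) ≤ 1 / 2)
    {x : ℤ → ℂ} (h1 : x (n + 1) = 0) (h2 : x (-n - 1) = 0) {F : ℝ}
    (hF : ∀ i ∈ Finset.range (2 * n + 1), ‖schOp v x (i - n)‖ ≤ F) :
    ((∀ a b, ‖u b‖ ≤ D * ρ ^ (b - a) * ‖u a‖) →
      ‖x (-n)‖ ≤ D * (1 - ρ)⁻¹ * F + ‖x n‖ / 2) ∧
    ((∀ a b, ‖u b‖ ≤ D * ρ ^ (a - b) * ‖u a‖) →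
      ‖x n‖ ≤ D * (1 - ρ)⁻¹ * F + ‖x (-n)‖ / 2) := by
  have hg := green hu n h1 h2
  have hF0 : 0 ≤ F := (norm_nonneg _).trans (hF 0 (by simp))
  have hgeo := geom_window_le hρ0 hρ1 (2 * n + 1)
  have hsum : ‖∑ i ∈ Finset.range (2 * n + 1), schOp v x (i - n) * u (i - n)‖ ≤
      F * ∑ i ∈ Finset.range (2 * n + 1), ‖u (i - n)‖ := by
    rw [Finset.mul_sum]
    refine norm_sum_le_of_le _ fun i hi => ?_
    rw [norm_mul]
    gcongr
    exact hF i hi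
  constructor
  · intro hd
    have hpos := norm_pos_iff.2 (hne (-n - 1))
    have hend : ‖u (n + 1)‖ ≤ 1 / 2 * ‖u (-n - 1)‖ := by
      refine (hd (-n - 1) (n + 1)).trans ?_
      rw [show (n : ℤ) + 1 - (-n - 1) = ((2 * n + 2 : ℕ) : ℤ) by push_cast; ring, zpow_natCast]
      gcongr
    have hu1 : ∑ i ∈ Finset.range (2 * n + 1), ‖u (i - n)‖ ≤ D * (1 - ρ)⁻¹ * ‖u (-n - 1)‖ := by
      calc _ ≤ ∑ i ∈ Finset.range (2 * n + 1), D * ρ ^ i * ‖u (-n - 1)‖ := by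
            refine Finset.sum_le_sum fun i _ => (hd (-n - 1) (i - n)).trans ?_
            rw [show (i : ℤ) - n - (-n - 1) = ((i + 1 : ℕ) : ℤ) by push_cast; ring, zpow_natCast]
            gcongr ?_ * ?_ * _
            exact pow_le_pow_of_le_one hρ0.le hρ1.le (Nat.le_succ i)
        _ = D * (∑ i ∈ Finset.range (2 * n + 1), ρ ^ i) * ‖u (-n - 1)‖ := by
            rw [Finset.mul_sum, Finset.sum_mul]
        _ ≤ _ := by gcongr
    have e : x (-n) * u (-n - 1) = -(x n * u (n + 1)) -
        ∑ i ∈ Finset.range (2 * n + 1), schOp v x (i - n) * u (i - n) := by rw [hg]; ring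
    have : ‖x (-n)‖ * ‖u (-n - 1)‖ ≤ (D * (1 - ρ)⁻¹ * F + ‖x n‖ / 2) * ‖u (-n - 1)‖ := by
      calc ‖x (-n)‖ * ‖u (-n - 1)‖ ≤ ‖x n‖ * ‖u (n + 1)‖ +
            ‖∑ i ∈ Finset.range (2 * n + 1), schOp v x (i - n) * u (i - n)‖ := by
            rw [← norm_mul, e, ← norm_mul, ← norm_neg (x n * u (n + 1))]
            exact norm_sub_le _ _
        _ ≤ ‖x n‖ * (1 / 2 * ‖u (-n - 1)‖) + F * (D * (1 - ρ)⁻¹ * ‖u (-n - 1)‖) := by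
            gcongr
            exact hsum.trans (by gcongr)
        _ = _ := by ring
    exact le_of_mul_le_mul_right this hpos
  · intro hd
    have hpos := norm_pos_iff.2 (hne (n + 1))
    have hend : ‖u (-n - 1)‖ ≤ 1 / 2 * ‖u (n + 1)‖ := by
      refine (hd (n + 1) (-n - 1)).trans ?_
      rw [show (n : ℤ) + 1 - (-n - 1) = ((2 * n + 2 : ℕ) : ℤ) by push_cast; ring, zpow_natCast]
      gcongr
    have hu1 : ∑ i ∈ Finset.range (2 * n + 1), ‖u (i - n)‖ ≤ D * (1 - ρ)⁻¹ * ‖u (n + 1)‖ := by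
      calc _ ≤ ∑ i ∈ Finset.range (2 * n + 1), D * ρ ^ (2 * n + 1 - 1 - i) * ‖u (n + 1)‖ := by
            refine Finset.sum_le_sum fun i hi => (hd (n + 1) (i - n)).trans ?_
            have hi' := Finset.mem_range.1 hi
            rw [show (n : ℤ) + 1 - (i - n) = ((2 * n + 1 - 1 - i + 1 : ℕ) : ℤ) by omega,
              zpow_natCast]
            gcongr ?_ * ?_ * _
            exact pow_le_pow_of_le_one hρ0.le hρ1.le (Nat.le_succ _)
        _ = D * (∑ i ∈ Finset.range (2 * n + 1), ρ ^ i) * ‖u (n + 1)‖ := by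
            rw [Finset.sum_range_reflect (fun i => D * ρ ^ i * ‖u (n + 1)‖), Finset.mul_sum,
              Finset.sum_mul]
        _ ≤ _ := by gcongr
    have e : x n * u (n + 1) = -(x (-n) * u (-n - 1)) -
        ∑ i ∈ Finset.range (2 * n + 1), schOp v x (i - n) * u (i - n) := by rw [hg]; ring
    have : ‖x n‖ * ‖u (n + 1)‖ ≤ (D * (1 - ρ)⁻¹ * F + ‖x (-n)‖ / 2) * ‖u (n + 1)‖ := by
      calc ‖x n‖ * ‖u (n + 1)‖ ≤ ‖x (-n)‖ * ‖u (-n - 1)‖ +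
            ‖∑ i ∈ Finset.range (2 * n + 1), schOp v x (i - n) * u (i - n)‖ := by
            rw [← norm_mul, e, ← norm_mul, ← norm_neg (x (-n) * u (-n - 1))]
            exact norm_sub_le _ _
        _ ≤ ‖x (-n)‖ * (1 / 2 * ‖u (n + 1)‖) + F * (D * (1 - ρ)⁻¹ * ‖u (n + 1)‖) := by
            gcongr
            exact hsum.trans (by gcongr)
        _ = _ := by ring
    exact le_of_mul_le_mul_right this hpos

/-- Two zero-free solutions decaying exponentially at `+∞` and at `-∞`, respectively. -/
theorem exists_dichotomy {v : ℤ → ℝ} {K : ℕ} (hK1 : 1 ≤ K) (hK8 : K ≤ 8) {lam : ℚ}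
    (hper : ∀ n : ℤ, v (n + (K : ℤ)) = v n)
    (hval : ∀ n : ℤ, v n = 0 ∨ v n = (lam : ℝ)) {ν : ℝ} (hν0 : 0 < ν)
    (hν : ∀ (x : ℤ → ℂ) (S T : Finset ℤ), (∀ k ∉ S, x k = 0) → (∀ k ∉ T, schOp v x k = 0) →
      ∑ k ∈ S, ‖x k‖ ^ 2 ≤ ν * ∑ k ∈ T, ‖schOp v x k‖ ^ 2) :
    ∃ D ρ : ℝ, 0 < D ∧ 0 < ρ ∧ ρ < 1 ∧
      (∃ u, IsSol v u ∧ (∀ k, u k ≠ 0) ∧ ∀ a b, ‖u b‖ ≤ D * ρ ^ (b - a) * ‖u a‖) ∧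
      (∃ u, IsSol v u ∧ (∀ k, u k ≠ 0) ∧ ∀ a b, ‖u b‖ ≤ D * ρ ^ (a - b) * ‖u a‖) := by
  obtain ⟨s, hs0, hsol, hsol'⟩ := exists_floquet hper
  -- exchanging `s` and `s⁻¹` if necessary, `‖s‖ ≤ 1`
  wlog hle : ‖s‖ ≤ 1 generalizing s
  · refine this s⁻¹ (inv_ne_zero hs0) hsol' (by rwa [inv_inv]) ?_
    rw [norm_inv]; exact inv_le_one_of_one_le₀ (le_of_not_ge hle)
  obtain ⟨u, hu, hu0, hus⟩ := hsol
  obtain ⟨w, hw, hw0, hws⟩ := hsol'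
  have hs1 := multiplier_norm_ne_one hK1 hper hν hν0 hu hu0 hus
  have hs1' := multiplier_norm_ne_one hK1 hper hν hν0 hw hw0 hws
  have hune := floquet_ne_zero hK1 hK8 hval hu hu0 hus hs1
  have hwne := floquet_ne_zero hK1 hK8 hval hw hw0 hws hs1'
  obtain ⟨D, hD, hDu⟩ := floquet_ratio hK1 hune hus hs0
  obtain ⟨E, hE, hEw⟩ := floquet_ratio hK1 hwne hws (inv_ne_zero hs0)
  have hK : (0 : ℝ) < 1 / K := by positivity
  have hρ0 : 0 < ‖s‖ ^ (1 / K : ℝ) := Real.rpow_pos_of_pos (norm_pos_iff.2 hs0) _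
  refine ⟨max D E, ‖s‖ ^ (1 / K : ℝ), lt_max_of_lt_left hD, hρ0,
    Real.rpow_lt_one (norm_nonneg _) (lt_of_le_of_ne hle hs1) hK,
    ⟨u, hu, hune, fun a b => (hDu a b).trans ?_⟩, ⟨w, hw, hwne, fun a b => (hEw a b).trans ?_⟩⟩
  · gcongr; exact le_max_left _ _
  · rw [norm_inv, Real.inv_rpow (norm_nonneg _), _root_.inv_zpow', neg_sub]
    gcongr; exact le_max_right _ _

/-- The a priori bound on the line, applied to the extension by zero of a vector on `[-n, n]`,
together with the control of the boundary values. -/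
theorem schFinSec_bddBelow {v : ℤ → ℝ} {ν : ℝ} (hν0 : 0 < ν)
    (hν : ∀ (x : ℤ → ℂ) (S T : Finset ℤ), (∀ k ∉ S, x k = 0) → (∀ k ∉ T, schOp v x k = 0) →
      ∑ k ∈ S, ‖x k‖ ^ 2 ≤ ν * ∑ k ∈ T, ‖schOp v x k‖ ^ 2)
    {D ρ : ℝ} (hD : 0 < D) (hρ0 : 0 < ρ) (hρ1 : ρ < 1) {u w : ℤ → ℂ}
    (hu : IsSol v u) (hune : ∀ k, u k ≠ 0) (hud : ∀ a b, ‖u b‖ ≤ D * ρ ^ (b - a) * ‖u a‖)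
    (hw : IsSol v w) (hwne : ∀ k, w k ≠ 0) (hwd : ∀ a b, ‖w b‖ ≤ D * ρ ^ (a - b) * ‖w a‖)
    (n : ℕ) (hn : D * ρ ^ (2 * n + 2) ≤ 1 / 2) (x : EuclideanSpace ℂ (Fin (2 * n + 1))) :
    ‖x‖ ^ 2 ≤ ν * (1 + 2 * (2 * (D * (1 - ρ)⁻¹)) ^ 2) *
      ‖Matrix.toEuclideanCLM (𝕜 := ℂ) (schFinSec v n) x‖ ^ 2 := by
  -- extension by zero
  let X : ℤ → ℂ := fun k =>
    if h : -n ≤ k ∧ k ≤ n then x ⟨(k + n).toNat, by omega⟩ else 0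
  have hXx : ∀ i : Fin (2 * n + 1), X ((i : ℤ) - n) = x i := by
    intro i
    have := i.2
    simp only [X]
    rw [dif_pos (by omega)]
    exact congrArg x (Fin.ext (by simp))
  have hX0 : ∀ k ∉ Finset.Icc (-n : ℤ) n, X k = 0 := by
    intro k hk
    rw [Finset.mem_Icc] at hk
    simp only [X]; rw [dif_neg hk]
  set f := Matrix.toEuclideanCLM (𝕜 := ℂ) (schFinSec v n) x with hf
  have hfX : ∀ i : Fin (2 * n + 1), f i = schOp v X ((i : ℤ) - n) := by
    intro i
    rw [← schFinSec_mulVec_s1 v n X hX0 i]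
    simp only [hXx]
    rw [hf]
    rfl
  have hfn : ‖f‖ ^ 2 = ∑ k ∈ Finset.Icc (-n : ℤ) n, ‖schOp v X k‖ ^ 2 := by
    rw [EuclideanSpace.norm_sq_eq, ← sum_fin_shift]
    exact Finset.sum_congr rfl fun i _ => by rw [hfX]
  have hxn : ‖x‖ ^ 2 = ∑ k ∈ Finset.Icc (-n : ℤ) n, ‖X k‖ ^ 2 := by
    rw [EuclideanSpace.norm_sq_eq, ← sum_fin_shift]
    exact Finset.sum_congr rfl fun i _ => by rw [hXx]
  have h1 : X (n + 1) = 0 := hX0 _ (by simp)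
  have h2 : X (-n - 1) = 0 := hX0 _ (by simp)
  have hF : ∀ i ∈ Finset.range (2 * n + 1), ‖schOp v X (i - n)‖ ≤ ‖f‖ := by
    intro i hi
    have := hfX ⟨i, Finset.mem_range.1 hi⟩
    simp only at this
    rw [← this]
    exact PiLp.norm_apply_le f _
  have hl := (boundary_le hu hune hD hρ0 hρ1 n hn h1 h2 hF).1 hud
  have hr := (boundary_le hw hwne hD hρ0 hρ1 n hn h1 h2 hF).2 hwd
  have hop1 : schOp v X (n + 1) = X n := by
    simp only [schOp]
    rw [h1, hX0 (n + 1 + 1) (by simp), show (n : ℤ) + 1 - 1 = n by ring]; simp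
  have hop2 : schOp v X (-n - 1) = X (-n) := by
    simp only [schOp]
    rw [h2, hX0 (-n - 1 - 1) (by simp), show -(n : ℤ) - 1 + 1 = -n by ring]; simp
  have h := hν X (Finset.Icc (-n : ℤ) n) (insert (-n - 1 : ℤ) (insert (n + 1 : ℤ)
      (Finset.Icc (-n : ℤ) n))) hX0 (by
    intro k hk
    simp only [Finset.mem_insert, Finset.mem_Icc, not_or] at hk
    simp only [schOp]
    rw [hX0 k, hX0 (k + 1), hX0 (k - 1)]
    · simp
    all_goals rw [Finset.mem_Icc]; omega)
  rw [Finset.sum_insert (by simp; omega), Finset.sum_insert (by simp), hop1, hop2, ← hfn, ← hxn]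
    at h
  have hG : 0 ≤ D * (1 - ρ)⁻¹ := mul_nonneg hD.le (inv_nonneg.2 (by linarith))
  set G := D * (1 - ρ)⁻¹
  have hl' : ‖X (-n)‖ ≤ 2 * G * ‖f‖ := by linarith
  have hr' : ‖X n‖ ≤ 2 * G * ‖f‖ := by linarith
  calc ‖x‖ ^ 2 ≤ _ := h
    _ ≤ ν * ((2 * G * ‖f‖) ^ 2 + ((2 * G * ‖f‖) ^ 2 + ‖f‖ ^ 2)) := by gcongr
    _ = _ := by ring

/-- for a `K`-periodic potential with `1 ≤ K ≤ 8` taking only the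
values `0` and `λ` with rational `λ`, invertibility of the two-sided discrete
Schrödinger operator implies stability of its finite sections. -/
theorem stmt1 (K : ℕ) (hK1 : 1 ≤ K) (hK8 : K ≤ 8) (lam : ℚ) (v : ℤ → ℝ)
    (hper : ∀ n : ℤ, v (n + (K : ℤ)) = v n)
    (hval : ∀ n : ℤ, v n = 0 ∨ v n = (lam : ℝ))
    (H : lp (fun _ : ℤ => ℂ) 2 →L[ℂ] lp (fun _ : ℤ => ℂ) 2)
    (hH : ∀ x : lp (fun _ : ℤ => ℂ) 2, ∀ n : ℤ,
      H x n = x (n + 1) + x (n - 1) + (v n : ℂ) * x n)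
    (hbij : Function.Bijective H) :
    ∃ n₀ : ℕ, ∃ C : ℝ, 0 < C ∧ ∀ n : ℕ, n₀ ≤ n →
      IsUnit (schFinSec v n) ∧
      ‖Matrix.toEuclideanCLM (𝕜 := ℂ) ((schFinSec v n)⁻¹)‖ ≤ C := by
  obtain ⟨ν, hν0, hν⟩ := exists_bddBelow H hH hbij
  obtain ⟨D, ρ, hD, hρ0, hρ1, ⟨u, hu, hune, hud⟩, ⟨w, hw, hwne, hwd⟩⟩ :=
    exists_dichotomy hK1 hK8 hper hval hν0 hν
  obtain ⟨n₀, hn₀⟩ := exists_pow_lt_of_lt_one (show 0 < 1 / (2 * D) by positivity) hρ1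
  set M := ν * (1 + 2 * (2 * (D * (1 - ρ)⁻¹)) ^ 2) with hM
  have hM0 : 0 < M := by positivity
  refine ⟨n₀, √M, Real.sqrt_pos.2 hM0, fun n hn => ?_⟩
  have hsmall : D * ρ ^ (2 * n + 2) ≤ 1 / 2 := by
    have h1 : ρ ^ (2 * n + 2) ≤ ρ ^ n₀ := pow_le_pow_of_le_one hρ0.le hρ1.le (by omega)
    calc D * ρ ^ (2 * n + 2) ≤ D * (1 / (2 * D)) := by gcongr; exact h1.trans hn₀.le
      _ = 1 / 2 := by field_simp
  have key : ∀ x : EuclideanSpace ℂ (Fin (2 * n + 1)),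
      ‖x‖ ≤ √M * ‖Matrix.toEuclideanCLM (𝕜 := ℂ) (schFinSec v n) x‖ := by
    intro x
    have h := schFinSec_bddBelow hν0 hν hD hρ0 hρ1 hu hune hud hw hwne hwd n hsmall x
    rw [← hM] at h
    refine le_of_sq_le_sq ?_ (by positivity)
    rwa [mul_pow, Real.sq_sqrt hM0.le]
  have hunit : IsUnit (schFinSec v n) := by
    rw [← Matrix.mulVec_injective_iff_isUnit]
    intro y z hyz
    have h0 : Matrix.toEuclideanCLM (𝕜 := ℂ) (schFinSec v n) (WithLp.toLp 2 (y - z)) = 0 := by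
      ext i
      have : (schFinSec v n *ᵥ (y - z)) i = 0 := by rw [Matrix.mulVec_sub, hyz, sub_self]; rfl
      simpa only [Matrix.ofLp_toEuclideanCLM, PiLp.zero_apply] using this
    have h1 := key (WithLp.toLp 2 (y - z))
    rw [h0, norm_zero, mul_zero, norm_le_zero_iff] at h1
    have h2 : y - z = 0 := congrArg WithLp.ofLp h1
    exact sub_eq_zero.1 h2
  refine ⟨hunit, ContinuousLinearMap.opNorm_le_bound _ (Real.sqrt_nonneg _) fun y => ?_⟩
  have h := key (Matrix.toEuclideanCLM (𝕜 := ℂ) ((schFinSec v n)⁻¹) y)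
  rwa [← mul_apply_eq_comp, ← map_mul,
    Matrix.mul_nonsing_inv _ ((Matrix.isUnit_iff_isUnit_det _).1 hunit), map_one,
    one_apply_eq_self] at h
end
end

section
/- Let v : ℤ → ℝ be a 2-periodic real-valued potential. If the discrete Schrödinger operator H on ℓ²(ℤ) with potential v is bijective, then the finite section method is applicable to H, i.e. the finite sections (Hₙ) are stable. -/
/-!
Write `a = v 0`, `b = v 1`; every value of `v` is `a` or `b`, and neighbouring values have
product `a * b`.

*Bijectivity excludes `0 ≤ a * b ≤ 4`.* In that range there is a Bloch solution
`u n = z ^ n * c n` of `H u = 0` with `|z| = 1`, `2 Re z = √(a * b)` and `c` of period two; it is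
bounded and nonzero. If `g ∈ ℓ²` solves `H g = δ_m`, the Wronskian
`W n = u n * g (n + 1) - g n * u (n + 1)` is constant on `n ≥ m` and on `n < m`, tends to `0` at
both ends, and jumps by `u m` at `m`. Hence `u m = 0` for each `m`, a contradiction
(`bounded_solution_eq_zero`). Only surjectivity of `H` is needed.

*Outside that range the finite sections are uniformly bounded below.* Let `σ` be the sign of `v`.
It is enough to have `c * ‖x‖² ≤ Re ⟪σ x, Hₙ x⟫` with `c > 0` independent of `n`
(`stable_of_form`). If `a * b < 0`, then `σ` alternates, the off-diagonal part of the form cancels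
by antisymmetry, and `c = min |a| |b|` works. If `a * b > 4`, then `σ` is constant, and with
`s = √(a * b)` the inequality `2 |x i| |x j| ≤ |v i| / s * |x i|² + |v j| / s * |x j|²` for
neighbours `i`, `j` bounds the off-diagonal part by `2 / s < 1` times the diagonal part.
-/

noncomputable section

open Matrix

/-! ### Two-periodic potentials -/

lemma periodic_eq (v : ℤ → ℝ) (hper : ∀ n : ℤ, v (n + 2) = v n) (n : ℤ) :
    v (2 * n) = v 0 ∧ v (2 * n + 1) = v 1 := by
  induction n using Int.induction_on with
  | zero => simp
  | succ k ih =>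
    have h1 := hper (2 * k)
    have h2 := hper (2 * k + 1)
    rw [← ih.1, ← ih.2, ← h1, ← h2]
    constructor <;> (congr 1; try ring)
  | pred k ih =>
    have h1 := hper (2 * (-k - 1))
    have h2 := hper (2 * (-k - 1) + 1)
    rw [← ih.1, ← ih.2, ← h1, ← h2]
    constructor <;> congr 1 <;> ring

lemma periodic_cases (v : ℤ → ℝ) (hper : ∀ n : ℤ, v (n + 2) = v n) (n : ℤ) :
    v n = v 0 ∨ v n = v 1 := by
  obtain ⟨k, rfl | rfl⟩ := n.even_or_odd'
  · exact Or.inl (periodic_eq v hper k).1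
  · exact Or.inr (periodic_eq v hper k).2

lemma periodic_mul (v : ℤ → ℝ) (hper : ∀ n : ℤ, v (n + 2) = v n) (n : ℤ) :
    v n * v (n + 1) = v 0 * v 1 := by
  obtain ⟨k, rfl | rfl⟩ := n.even_or_odd'
  · rw [(periodic_eq v hper k).1, (periodic_eq v hper k).2]
  · rw [(periodic_eq v hper k).2, show 2 * k + 1 + 1 = 2 * (k + 1) by ring,
      (periodic_eq v hper (k + 1)).1, mul_comm]

/-! ### Bounded solutions of `H u = 0` -/

/-- If `H` is onto `ℓ²(ℤ)`, the equation `H u = 0` has no nonzero bounded solution. The point mass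
at `m` is `H g` for some `g ∈ ℓ²`, and the Wronskian of `u` and `g` vanishes on both sides of `m`
but jumps by `u m` there. -/
lemma bounded_solution_eq_zero (v : ℤ → ℝ)
    (H : lp (fun _ : ℤ => ℂ) 2 →L[ℂ] lp (fun _ : ℤ => ℂ) 2)
    (hH : ∀ x : lp (fun _ : ℤ => ℂ) 2, ∀ n : ℤ,
      H x n = x (n + 1) + x (n - 1) + (v n : ℂ) * x n)
    (hsurj : Function.Surjective H) (u : ℤ → ℂ) (K : ℝ) (hK : ∀ n, ‖u n‖ ≤ K)
    (hu : ∀ n, u (n + 1) + u (n - 1) + (v n : ℂ) * u n = 0) (m : ℤ) : u m = 0 := by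
  obtain ⟨g, hg⟩ := hsurj (lp.single 2 m (1 : ℂ))
  have hgm : g (m + 1) + g (m - 1) + (v m : ℂ) * g m = 1 := by
    rw [← hH, hg]; simp
  have hgn : ∀ n, n ≠ m → g (n + 1) + g (n - 1) + (v n : ℂ) * g n = 0 := by
    intro n hn
    rw [← hH, hg]; simp [hn]
  have hg0 : Filter.Tendsto (fun n => g n) Filter.cofinite (nhds 0) := by
    have hs := (lp.memℓp g).summable (by norm_num)
    have h0 := hs.tendsto_cofinite_zero
    rw [tendsto_zero_iff_norm_tendsto_zero]
    have h1 := (Real.continuous_sqrt.tendsto 0).comp h0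
    rw [Real.sqrt_zero] at h1
    refine h1.congr fun n => ?_
    simp [Real.sqrt_sq]
  set W : ℤ → ℂ := fun n => u n * g (n + 1) - g n * u (n + 1) with hW
  have hstep : ∀ n, W n - W (n - 1) =
      u n * (g (n + 1) + g (n - 1) + (v n : ℂ) * g n) := by
    intro n
    simp only [hW, sub_add_cancel]
    linear_combination (-g n) * hu n
  have hub : Filter.IsBoundedUnder (· ≤ ·) Filter.cofinite (norm ∘ u) :=
    Filter.isBoundedUnder_of ⟨K, hK⟩
  have hub' : Filter.IsBoundedUnder (· ≤ ·) Filter.cofinite (norm ∘ fun n => u (n + 1)) :=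
    Filter.isBoundedUnder_of ⟨K, fun n => hK (n + 1)⟩
  have hg1 : Filter.Tendsto (fun n => g (n + 1)) Filter.cofinite (nhds 0) :=
    hg0.comp (add_left_injective (1 : ℤ)).tendsto_cofinite
  have hW0 : Filter.Tendsto W Filter.cofinite (nhds 0) := by
    have h1 := hg1.zero_mul_isBoundedUnder_le hub
    have h2 := hg0.zero_mul_isBoundedUnder_le hub'
    simpa [hW, mul_comm] using h1.sub h2
  have hright : ∀ k : ℕ, W (m + k) = W m := by
    intro k
    induction k with
    | zero => simp
    | succ k ih =>
      have h := hstep (m + (k + 1 : ℕ))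
      rw [hgn _ (by push_cast; omega), mul_zero, sub_eq_zero] at h
      rw [h, ← ih]; congr 1; push_cast; ring
  have hleft : ∀ k : ℕ, W (m - 1 - k) = W (m - 1) := by
    intro k
    induction k with
    | zero => simp
    | succ k ih =>
      have h := hstep (m - 1 - k)
      rw [hgn _ (by omega), mul_zero, sub_eq_zero] at h
      rw [← ih, h]; congr 1; push_cast; ring
  have hWm : W m = 0 := by
    have hinj : Function.Injective fun k : ℕ => m + (k : ℤ) := fun i j h => by
      simpa using h
    have h := hW0.comp hinj.tendsto_cofinite
    rw [Nat.cofinite_eq_atTop] at h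
    exact tendsto_nhds_unique (tendsto_const_nhds.congr fun k => (hright k).symm) h
  have hWm1 : W (m - 1) = 0 := by
    have hinj : Function.Injective fun k : ℕ => m - 1 - (k : ℤ) := fun i j h => by
      simpa using h
    have h := hW0.comp hinj.tendsto_cofinite
    rw [Nat.cofinite_eq_atTop] at h
    exact tendsto_nhds_unique (tendsto_const_nhds.congr fun k => (hleft k).symm) h
  have h := hstep m
  rw [hWm, hWm1, hgm] at h
  simpa using h.symm

/-- For `0 ≤ v 0 * v 1 ≤ 4` the equation `H u = 0` has a nonzero bounded (Bloch) solution. -/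
lemma exists_bounded_solution (v : ℤ → ℝ) (hper : ∀ n : ℤ, v (n + 2) = v n)
    (h0 : 0 ≤ v 0 * v 1) (h4 : v 0 * v 1 ≤ 4) :
    ∃ (u : ℤ → ℂ) (K : ℝ), (∀ n, ‖u n‖ ≤ K) ∧
      (∀ n, u (n + 1) + u (n - 1) + (v n : ℂ) * u n = 0) ∧ ∃ m, u m ≠ 0 := by
  set s := √(v 0 * v 1) with hs
  have hss : s * s = v 0 * v 1 := Real.mul_self_sqrt h0
  have hs0 : 0 ≤ s := Real.sqrt_nonneg _
  have hs2 : s ≤ 2 := by nlinarith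
  -- The amplitudes on the even and odd sites form a kernel vector of `!![a, s; s, b]`.
  obtain ⟨P, Q, hPQ, he, ho⟩ : ∃ P Q : ℝ, (P ≠ 0 ∨ Q ≠ 0) ∧
      s * Q + v 0 * P = 0 ∧ s * P + v 1 * Q = 0 := by
    by_cases ha : v 0 = 0
    · have : s = 0 := by rw [hs, ha]; simp
      exact ⟨1, 0, by simp, by simp [ha], by simp [this]⟩
    · exact ⟨s, -v 0, Or.inr (by simpa using ha), by ring, by linear_combination hss⟩
  set φ := Real.arccos (s / 2) with hφ
  have hcos : Real.cos φ = s / 2 := Real.cos_arccos (by linarith) (by linarith)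
  set z : ℂ := Complex.exp (φ * Complex.I) with hz
  have hznorm : ‖z‖ = 1 := Complex.norm_exp_ofReal_mul_I φ
  have hz0 : z ≠ 0 := Complex.exp_ne_zero _
  have hzs : z + z⁻¹ = (s : ℂ) := by
    have h : (s : ℂ) = 2 * Complex.cos φ := by
      rw [← Complex.ofReal_cos, hcos]; push_cast; ring
    rw [h, Complex.two_cos, hz, ← Complex.exp_neg, neg_mul]
  set c : ℤ → ℝ := fun n => if Even n then P else Q with hc
  have hcv : ∀ n, s * c (n + 1) + v n * c n = 0 := by
    intro n
    obtain ⟨k, rfl | rfl⟩ := n.even_or_odd'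
    · have hk : ¬Odd (2 * k) := Int.not_odd_iff_even.2 (even_two_mul k)
      simpa [hc, (periodic_eq v hper k).1, Int.even_add_one, hk] using he
    · have hk : ¬Odd (2 * k) := Int.not_odd_iff_even.2 (even_two_mul k)
      simpa [hc, (periodic_eq v hper k).2, Int.even_add_one, hk] using ho
  have hc1 : ∀ n, c (n - 1) = c (n + 1) := by
    intro n
    simp only [hc]
    congr 1
    simp
  refine ⟨fun n => z ^ n * (c n : ℂ), max |P| |Q|, ?_, ?_, ?_⟩
  · intro n
    simp only [norm_mul, norm_zpow, hznorm, _root_.one_zpow, one_mul, Complex.norm_real,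
      Real.norm_eq_abs, hc]
    split_ifs
    · exact le_max_left _ _
    · exact le_max_right _ _
  · intro n
    have h : (s : ℂ) * c (n + 1) + v n * c n = 0 := by exact_mod_cast hcv n
    simp only [hc1, zpow_add_one₀ hz0, zpow_sub_one₀ hz0]
    linear_combination (z ^ n * c (n + 1)) * hzs + z ^ n * h
  · rcases hPQ with h | h
    · exact ⟨0, by simpa [hc] using h⟩
    · exact ⟨1, by simpa [hc, hz0] using h⟩

/-! ### Inverse bounds from a form estimate -/

/-- A matrix `A` with `c * ‖x‖² ≤ Re ⟪σ x, A x⟫` for some diagonal `σ` with entries in `[-1, 1]`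
is invertible with `‖A⁻¹‖ ≤ c⁻¹`. -/
lemma stable_of_form {ι : Type*} [Fintype ι] [DecidableEq ι] (A : Matrix ι ι ℂ)
    (σ : ι → ℝ) (hσ : ∀ i, |σ i| ≤ 1) (c : ℝ) (hc : 0 < c)
    (h : ∀ x : ι → ℂ, c * ∑ i, ‖x i‖ ^ 2 ≤ ∑ i, σ i * (star (x i) * (A *ᵥ x) i).re) :
    IsUnit A ∧ ‖Matrix.toEuclideanCLM (𝕜 := ℂ) A⁻¹‖ ≤ c⁻¹ := by
  have key : ∀ x : EuclideanSpace ℂ ι, c * ‖x‖ ≤ ‖Matrix.toEuclideanCLM (𝕜 := ℂ) A x‖ := by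
    intro x
    rcases eq_or_ne x 0 with rfl | hx
    · simp
    have h1 : c * ‖x‖ ^ 2 ≤ ‖x‖ * ‖Matrix.toEuclideanCLM (𝕜 := ℂ) A x‖ := by
      rw [EuclideanSpace.norm_sq_eq]
      refine (h x).trans ?_
      rw [EuclideanSpace.norm_eq x, EuclideanSpace.norm_eq (Matrix.toEuclideanCLM (𝕜 := ℂ) A x)]
      refine le_trans (Finset.sum_le_sum fun i _ => ?_) (Real.sum_mul_le_sqrt_mul_sqrt _ _ _)
      rw [Matrix.ofLp_toEuclideanCLM]
      calc σ i * (star (x i) * (A *ᵥ x) i).re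
          ≤ |σ i| * |(star (x i) * (A *ᵥ x) i).re| := by
            rw [← abs_mul]; exact le_abs_self _
        _ ≤ 1 * ‖star (x i) * (A *ᵥ x) i‖ := by
            gcongr
            · exact hσ i
            · exact Complex.abs_re_le_norm _
        _ = ‖x i‖ * ‖(A *ᵥ x) i‖ := by rw [one_mul, norm_mul, norm_star]
    have hx' : 0 < ‖x‖ := norm_pos_iff.2 hx
    nlinarith
  have hA : IsUnit A := by
    rw [← Matrix.mulVec_injective_iff_isUnit]
    intro x y hxy
    have h1 := h (x - y)
    have h2 : A *ᵥ (x - y) = 0 := by rw [Matrix.mulVec_sub]; exact sub_eq_zero.2 hxy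
    simp only [h2, Pi.zero_apply, mul_zero, Complex.zero_re, Finset.sum_const_zero] at h1
    have h3 : ∑ i, ‖(x - y) i‖ ^ 2 = 0 :=
      le_antisymm (by by_contra! hlt; nlinarith) (Finset.sum_nonneg fun i _ => by positivity)
    rw [Finset.sum_eq_zero_iff_of_nonneg (fun i _ => by positivity)] at h3
    funext i
    have h4 := h3 i (Finset.mem_univ i)
    simpa [sub_eq_zero] using h4
  refine ⟨hA, ContinuousLinearMap.opNorm_le_bound _ (by positivity) fun y => ?_⟩
  have h1 := key (Matrix.toEuclideanCLM (𝕜 := ℂ) A⁻¹ y)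
  have h2 : Matrix.toEuclideanCLM (𝕜 := ℂ) A (Matrix.toEuclideanCLM (𝕜 := ℂ) A⁻¹ y) = y := by
    rw [← mul_apply_eq_comp, ← map_mul,
      Matrix.mul_nonsing_inv _ ((Matrix.isUnit_iff_isUnit_det A).1 hA), map_one]
    rfl
  rw [h2] at h1
  rwa [inv_mul_eq_div, le_div_iff₀' hc]

/-! ### The quadratic form of a finite section -/

/-- The off-diagonal part of `schFinSec`: the adjacency matrix of a path with `N` vertices. -/
def pathAdj (N : ℕ) (i j : Fin N) : ℝ :=
  if (i : ℤ) = (j : ℤ) + 1 ∨ (j : ℤ) = (i : ℤ) + 1 then 1 else 0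

lemma pathAdj_comm (N : ℕ) (i j : Fin N) : pathAdj N i j = pathAdj N j i := by
  simp only [pathAdj, or_comm]

lemma pathAdj_nonneg (N : ℕ) (i j : Fin N) : 0 ≤ pathAdj N i j := by
  unfold pathAdj; split_ifs <;> norm_num

lemma sum_pathAdj_le (N : ℕ) (i : Fin N) : ∑ j, pathAdj N i j ≤ 2 := by
  have h : ∀ p : Fin N → Prop, [DecidablePred p] → (∀ j k, p j → p k → j = k) →
      ∑ j, (if p j then (1 : ℝ) else 0) ≤ 1 := by
    intro p _ hp
    rw [Finset.sum_boole]
    exact_mod_cast Finset.card_le_one.2 fun j hj k hk =>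
      hp j k (Finset.mem_filter.1 hj).2 (Finset.mem_filter.1 hk).2
  have h1 := h (fun j => (i : ℤ) = (j : ℤ) + 1) fun j k hj hk => by ext; omega
  have h2 := h (fun j => (j : ℤ) = (i : ℤ) + 1) fun j k hj hk => by ext; omega
  have h3 : ∑ j, pathAdj N i j ≤ ∑ j : Fin N, ((if (i : ℤ) = (j : ℤ) + 1 then (1 : ℝ) else 0) +
      (if (j : ℤ) = (i : ℤ) + 1 then 1 else 0)) := by
    refine Finset.sum_le_sum fun j _ => ?_
    unfold pathAdj
    split_ifs <;> first | (exfalso; omega) | norm_num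
  rw [Finset.sum_add_distrib] at h3
  linarith

lemma form_eq (v : ℤ → ℝ) (n : ℕ) (σ : Fin (2 * n + 1) → ℝ) (x : Fin (2 * n + 1) → ℂ) :
    ∑ i, σ i * (star (x i) * (schFinSec v n *ᵥ x) i).re =
      ∑ i, σ i * v ((i : ℤ) - n) * ‖x i‖ ^ 2 +
      ∑ i, ∑ j, σ i * pathAdj _ i j * (star (x i) * x j).re := by
  rw [← Finset.sum_add_distrib]
  refine Finset.sum_congr rfl fun i _ => ?_
  have hentry : ∀ j, schFinSec v n i j =
      (if i = j then ((v ((i : ℤ) - n) : ℝ) : ℂ) else 0) + (pathAdj _ i j : ℂ) := by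
    intro j
    simp only [schFinSec, Matrix.of_apply, pathAdj, Fin.ext_iff, Nat.cast_inj]
    split_ifs <;> first | (exfalso; omega) | simp
  have hmul : (schFinSec v n *ᵥ x) i =
      (v ((i : ℤ) - n) : ℂ) * x i + ∑ j, (pathAdj _ i j : ℂ) * x j := by
    simp only [Matrix.mulVec, dotProduct, hentry, add_mul, Finset.sum_add_distrib, ite_mul,
      zero_mul, Finset.sum_ite_eq, Finset.mem_univ, if_true]
  have hnorm : ‖x i‖ ^ 2 = (star (x i) * x i).re := by
    rw [← Complex.normSq_eq_norm_sq]; simp [Complex.normSq_apply]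
  rw [hmul, hnorm, mul_add, Finset.mul_sum, Complex.add_re, Complex.re_sum, mul_add,
    Finset.mul_sum, mul_left_comm, Complex.re_ofReal_mul, mul_assoc]
  congr 1
  refine Finset.sum_congr rfl fun j _ => ?_
  rw [mul_left_comm, Complex.re_ofReal_mul, mul_assoc]

lemma re_star_mul_comm (x y : ℂ) : (star x * y).re = (star y * x).re := by
  simp; ring

/-- If `σ` alternates between neighbours, the off-diagonal part of the form vanishes. -/
lemma offdiag_eq_zero (N : ℕ) (σ : Fin N → ℝ)
    (hσ : ∀ i j, pathAdj N i j ≠ 0 → σ j = -σ i) (x : Fin N → ℂ) :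
    ∑ i, ∑ j, σ i * pathAdj _ i j * (star (x i) * x j).re = 0 := by
  have h : ∑ i, ∑ j, σ i * pathAdj _ i j * (star (x i) * x j).re =
      -∑ i, ∑ j, σ i * pathAdj _ i j * (star (x i) * x j).re := by
    conv_lhs => rw [Finset.sum_comm]
    simp only [← Finset.sum_neg_distrib]
    refine Finset.sum_congr rfl fun i _ => Finset.sum_congr rfl fun j _ => ?_
    rw [re_star_mul_comm, pathAdj_comm]
    by_cases h0 : pathAdj N i j = 0
    · simp [h0]
    · rw [hσ i j h0]; ring
  linarith

/-- A weighted Schur test: weights `t` with `t i * t j = 1` for neighbours bound the off-diagonal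
part of the form, since every vertex has at most two neighbours. -/
lemma offdiag_ge (N : ℕ) (σ t : Fin N → ℝ) (hσ : ∀ i, |σ i| ≤ 1) (ht0 : ∀ i, 0 ≤ t i)
    (ht : ∀ i j, pathAdj N i j ≠ 0 → t i * t j = 1) (x : Fin N → ℂ) :
    -(2 * ∑ i, t i * ‖x i‖ ^ 2) ≤
      ∑ i, ∑ j, σ i * pathAdj _ i j * (star (x i) * x j).re := by
  have h1 : ∀ i j, -(pathAdj N i j * (t i * ‖x i‖ ^ 2) / 2 + pathAdj N i j * (t j * ‖x j‖ ^ 2) / 2)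
      ≤ σ i * pathAdj _ i j * (star (x i) * x j).re := by
    intro i j
    by_cases h0 : pathAdj N i j = 0
    · simp [h0]
    have hB := pathAdj_nonneg N i j
    have htt := ht i j h0
    have h2 : |σ i * (star (x i) * x j).re| ≤ ‖x i‖ * ‖x j‖ := by
      rw [abs_mul, ← one_mul (‖x i‖ * ‖x j‖)]
      gcongr
      · exact hσ i
      · exact (Complex.abs_re_le_norm _).trans (by rw [norm_mul, norm_star])
    have h3 : 2 * (‖x i‖ * ‖x j‖) ≤ t i * ‖x i‖ ^ 2 + t j * ‖x j‖ ^ 2 := by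
      have hti : 0 < t i := (ht0 i).lt_of_ne' (by rintro h; simp [h] at htt)
      have h4 : 0 ≤ t j * (t i * ‖x i‖ - ‖x j‖) ^ 2 := mul_nonneg (ht0 j) (sq_nonneg _)
      have h5 : t j * (t i * ‖x i‖ - ‖x j‖) ^ 2 =
          (t i * ‖x i‖ ^ 2 + t j * ‖x j‖ ^ 2) - 2 * (‖x i‖ * ‖x j‖) := by
        linear_combination (t i * ‖x i‖ ^ 2 - 2 * ‖x i‖ * ‖x j‖) * htt
      linarith
    have h6 := (abs_le.1 h2).1
    nlinarith [mul_le_mul_of_nonneg_left (show -((t i * ‖x i‖ ^ 2 + t j * ‖x j‖ ^ 2) / 2) ≤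
      σ i * (star (x i) * x j).re by linarith) hB]
  refine le_trans ?_ (Finset.sum_le_sum fun i _ => Finset.sum_le_sum fun j _ => h1 i j)
  have h2 : ∑ i, ∑ j, pathAdj N i j * (t i * ‖x i‖ ^ 2) / 2 ≤ ∑ i, t i * ‖x i‖ ^ 2 := by
    refine Finset.sum_le_sum fun i _ => ?_
    rw [← Finset.sum_div, ← Finset.sum_mul]
    have := mul_le_mul_of_nonneg_right (sum_pathAdj_le N i)
      (show 0 ≤ t i * ‖x i‖ ^ 2 from mul_nonneg (ht0 i) (by positivity))
    linarith
  have h3 : ∑ i, ∑ j, pathAdj N i j * (t j * ‖x j‖ ^ 2) / 2 =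
      ∑ i, ∑ j, pathAdj N i j * (t i * ‖x i‖ ^ 2) / 2 := by
    rw [Finset.sum_comm]
    simp only [pathAdj_comm]
  simp only [Finset.sum_neg_distrib, Finset.sum_add_distrib, h3]
  linarith

/-! ### Stability of the finite sections -/

/-- for a `2`-periodic real-valued potential, invertibility of the
two-sided discrete Schrödinger operator implies stability of its finite sections. -/
theorem stmt2 (v : ℤ → ℝ)
    (hper : ∀ n : ℤ, v (n + 2) = v n)
    (H : lp (fun _ : ℤ => ℂ) 2 →L[ℂ] lp (fun _ : ℤ => ℂ) 2)
    (hH : ∀ x : lp (fun _ : ℤ => ℂ) 2, ∀ n : ℤ,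
      H x n = x (n + 1) + x (n - 1) + (v n : ℂ) * x n)
    (hbij : Function.Bijective H) :
    ∃ n₀ : ℕ, ∃ C : ℝ, 0 < C ∧ ∀ n : ℕ, n₀ ≤ n →
      IsUnit (schFinSec v n) ∧
      ‖Matrix.toEuclideanCLM (𝕜 := ℂ) ((schFinSec v n)⁻¹)‖ ≤ C := by
  have hprod : v 0 * v 1 < 0 ∨ 4 < v 0 * v 1 := by
    by_contra! h
    obtain ⟨u, K, hK, hu, m, hm⟩ := exists_bounded_solution v hper h.1 h.2
    exact hm (bounded_solution_eq_zero v H hH hbij.2 u K hK hu m)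
  have ha : v 0 ≠ 0 := by rintro h; norm_num [h] at hprod
  have hb : v 1 ≠ 0 := by rintro h; norm_num [h] at hprod
  set μ := min |v 0| |v 1| with hμ
  have hμ0 : 0 < μ := lt_min (abs_pos.2 ha) (abs_pos.2 hb)
  have hμv : ∀ k, μ ≤ |v k| := by
    intro k
    rcases periodic_cases v hper k with h | h <;> rw [h]
    · exact min_le_left _ _
    · exact min_le_right _ _
  have hadj : ∀ (n : ℕ) (i j : Fin (2 * n + 1)), pathAdj _ i j ≠ 0 →
      v ((i : ℤ) - n) * v ((j : ℤ) - n) = v 0 * v 1 := by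
    intro n i j hij
    have h : (i : ℤ) = (j : ℤ) + 1 ∨ (j : ℤ) = (i : ℤ) + 1 := by
      by_contra h; exact hij (if_neg h)
    rcases h with h | h
    · rw [h, add_sub_right_comm, mul_comm]; exact periodic_mul v hper _
    · rw [h, add_sub_right_comm]; exact periodic_mul v hper _
  set σ : ℤ → ℝ := fun k => SignType.sign (v k) with hσdef
  have hσ1 : ∀ k, |σ k| ≤ 1 := by
    intro k
    simp only [hσdef]
    rcases lt_trichotomy (v k) 0 with h | h | h <;> simp [h]
  have hσv : ∀ k, σ k * v k = |v k| := fun k => sign_mul_self (v k)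
  rcases hprod with hneg | hpos
  · refine ⟨0, μ⁻¹, by positivity, fun n _ => ?_⟩
    refine stable_of_form _ (fun i : Fin (2 * n + 1) => σ ((i : ℤ) - n)) (fun i => hσ1 _) μ hμ0 fun x => ?_
    rw [form_eq, offdiag_eq_zero, add_zero, Finset.mul_sum]
    · refine Finset.sum_le_sum fun i _ => ?_
      rw [hσv]
      gcongr
      exact hμv _
    · intro i j hij
      have h := hadj n i j hij
      rw [← h] at hneg
      simp only [hσdef]
      rcases mul_neg_iff.1 hneg with ⟨h1, h2⟩ | ⟨h1, h2⟩ <;> simp [h1, h2]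
  · set s := √(v 0 * v 1) with hs
    have hss : s * s = v 0 * v 1 := Real.mul_self_sqrt (by linarith)
    have hs2 : 2 < s := by
      rw [hs, Real.lt_sqrt (by norm_num)]; linarith
    have hs0 : 0 < s := by linarith
    have hc : 0 < 1 - 2 / s := by
      rw [sub_pos, div_lt_one hs0]; exact hs2
    refine ⟨0, (μ * (1 - 2 / s))⁻¹, by positivity, fun n _ => ?_⟩
    refine stable_of_form _ (fun i : Fin (2 * n + 1) => σ ((i : ℤ) - n)) (fun i => hσ1 _) _ (by positivity)
      fun x => ?_
    rw [form_eq]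
    have h1 := offdiag_ge _ (fun i : Fin (2 * n + 1) => σ ((i : ℤ) - n))
      (fun i => |v ((i : ℤ) - n)| / s) (fun i => hσ1 _) (fun i => by positivity) (by
        intro i j hij
        rw [div_mul_div_comm, ← abs_mul, hadj n i j hij, hss, abs_of_pos (by linarith),
          div_self (by linarith)]) x
    refine le_trans ?_ (add_le_add_right h1 _)
    rw [Finset.mul_sum, Finset.mul_sum, ← sub_eq_add_neg, ← Finset.sum_sub_distrib]
    refine Finset.sum_le_sum fun i _ => ?_
    simp only [hσv]
    have h2 : |v ((i : ℤ) - n)| * ‖x i‖ ^ 2 - 2 * (|v ((i : ℤ) - n)| / s * ‖x i‖ ^ 2) =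
        |v ((i : ℤ) - n)| * (1 - 2 / s) * ‖x i‖ ^ 2 := by ring
    rw [h2]
    gcongr
    exact hμv _
end
end

section
/- Let K ≥ 1 and let v : ℤ → ℝ be a K-periodic potential taking only integer values. If the one-sided discrete Schrödinger operator H₊ on ℓ²(ℕ) with potential v is bijective, then the finite section method is applicable to H₊; in particular, there exist n₀ ∈ ℕ and C > 0 such that for all n ≥ n₀ the one-sided finite section matrices (H_{ij})_{i,j=0..n} are invertible with inverses of operator norm at most C. -/
/-!
Extending `x ∈ ℂ^(n+1)` by zero gives `X ∈ ℓ²(ℕ)` with `‖H₊ X‖² = ‖Aₙ x‖² + |xₙ|²`, so the lower bound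
`‖X‖ ≤ c ‖H₊ X‖` coming from bijectivity reduces stability to an estimate `|xₙ| ≤ D ‖Aₙ x‖` with `D`
independent of large `n` (`last_le`).

For that estimate, solve the equation `Aₙ x = f` backwards from the last entry. Up to an error growing
like `Bᵏ ‖f‖`, where `B = M + 2` and `M` bounds `|v|`, the entry `x (n - k)` equals `p k * xₙ`, where `p` is the solution of the homogeneous
recurrence with `p 0 = 1` and zero boundary value before it (`backSol_approx`). As the potential is
integer-valued, so is `p`, and as two consecutive values of `p` never vanish together, at least `N` of
the first `2 N` have modulus at least `1`. Hence `‖f‖` very small compared to `|xₙ|` would force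
`‖x‖² ≥ N |xₙ|² / 4`, contradicting `‖x‖² ≤ c² (‖f‖² + |xₙ|²)` as soon as `N > 8 c²`.
Periodicity enters only through boundedness of `v`.
-/

noncomputable section

open Matrix

/-- The `n`-th finite section of the one-sided discrete Schrödinger operator with
potential `v`: the `(n+1) × (n+1)` tridiagonal matrix with diagonal entries
`v 0, …, v n` and entries `1` on the first sub- and superdiagonal. -/
def schFinSecPlus (v : ℤ → ℝ) (n : ℕ) : Matrix (Fin (n + 1)) (Fin (n + 1)) ℂ :=
  Matrix.of fun i j =>
    if (i : ℕ) = (j : ℕ) then ((v ((i : ℕ) : ℤ)) : ℂ)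
    else if (i : ℕ) = (j : ℕ) + 1 ∨ (j : ℕ) = (i : ℕ) + 1 then 1 else 0

/-! ### Backward solutions and the last entry -/

/-- The integer solution of `p (k + 2) + a (k + 1) * p (k + 1) + p k = 0` with `p 0 = 1` and
`p (-1) = 0`; the sequence `a` is the potential read backwards from the cut-off point. -/
def backSol (a : ℕ → ℤ) : ℕ → ℤ
  | 0 => 1
  | 1 => -a 0
  | (k + 2) => -a (k + 1) * backSol a (k + 1) - backSol a k

lemma backSol_ne (a : ℕ → ℤ) (k : ℕ) : backSol a k ≠ 0 ∨ backSol a (k + 1) ≠ 0 := by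
  induction k with
  | zero => left; simp [backSol]
  | succ k ih =>
    by_contra! h
    obtain ⟨h1, h2⟩ := h
    rw [backSol, h1] at h2
    rcases ih with h | h
    · apply h; linarith
    · exact h h1

/-- A solution `Y` of the inhomogeneous recurrence is close to `Y 0` times the homogeneous solution,
with an error growing at most geometrically. -/
lemma backSol_approx (a : ℕ → ℤ) (M E : ℝ) (hM : ∀ k, |(a k : ℝ)| ≤ M) (hE : 0 ≤ E)
    (Y : ℕ → ℂ) (n : ℕ) (h0 : 1 ≤ n → ‖Y 1 + a 0 * Y 0‖ ≤ E)
    (hY : ∀ k, k + 2 ≤ n → ‖Y (k + 2) + a (k + 1) * Y (k + 1) + Y k‖ ≤ E) (k : ℕ) (hk : k ≤ n) :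
    ‖Y k - backSol a k * Y 0‖ ≤ (M + 2) ^ k * E := by
  have hM0 : 0 ≤ M := (abs_nonneg _).trans (hM 0)
  induction k using Nat.strong_induction_on with
  | _ k ih =>
    match k, ih, hk with
    | 0, _, _ => simpa [backSol] using hE
    | 1, _, hk =>
      have h := h0 hk
      have e : Y 1 - backSol a 1 * Y 0 = Y 1 + a 0 * Y 0 := by simp [backSol]
      rw [e]
      nlinarith
    | k + 2, ih, hk =>
      have e1 := ih (k + 1) (by omega) (by omega)
      have e0 := ih k (by omega) (by omega)
      have e2 := hY k hk
      have e : Y (k + 2) - backSol a (k + 2) * Y 0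
          = (Y (k + 2) + a (k + 1) * Y (k + 1) + Y k)
            - a (k + 1) * (Y (k + 1) - backSol a (k + 1) * Y 0) - (Y k - backSol a k * Y 0) := by
        simp only [backSol]; push_cast; ring
      have ha : ‖(a (k + 1) : ℂ)‖ ≤ M := by
        rw [Complex.norm_intCast]; exact hM _
      have hP : 1 ≤ (M + 2) ^ k := one_le_pow₀ (by linarith)
      have hPE : E ≤ (M + 2) ^ k * E := by nlinarith
      calc ‖Y (k + 2) - backSol a (k + 2) * Y 0‖
          ≤ ‖Y (k + 2) + a (k + 1) * Y (k + 1) + Y k‖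
            + ‖(a (k + 1) : ℂ)‖ * ‖Y (k + 1) - backSol a (k + 1) * Y 0‖
            + ‖Y k - backSol a k * Y 0‖ := by
            rw [e, ← norm_mul]
            exact (norm_sub_le _ _).trans (by gcongr; exact norm_sub_le _ _)
        _ ≤ E + M * ((M + 2) ^ (k + 1) * E) + (M + 2) ^ k * E := by gcongr
        _ ≤ (M + 2) ^ (k + 2) * E := by
            have : 0 ≤ (M + 2) ^ k * E := by positivity
            have h1 : (M + 2) ^ (k + 2) * E
                = M * ((M + 2) ^ (k + 1) * E) + (2 * M + 4) * ((M + 2) ^ k * E) := by ring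
            rw [h1]
            nlinarith [mul_nonneg hM0 this]

/-- Among `Y 0, …, Y (2 N - 1)`, at least `N` entries have modulus at least `‖Y 0‖ / 2`, provided
each entry differs from the integer multiple `backSol a k * Y 0` by at most `‖Y 0‖ / 2`. -/
lemma sum_lower (a : ℕ → ℤ) (Y : ℕ → ℂ) (N : ℕ)
    (h : ∀ k < 2 * N, ‖Y k - backSol a k * Y 0‖ ≤ ‖Y 0‖ / 2) :
    N * (‖Y 0‖ ^ 2 / 4) ≤ ∑ k ∈ Finset.range (2 * N), ‖Y k‖ ^ 2 := by
  have key : ∀ k < 2 * N, backSol a k ≠ 0 → ‖Y 0‖ ^ 2 / 4 ≤ ‖Y k‖ ^ 2 := by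
    intro k hk hp
    have h1 : (1 : ℝ) ≤ ‖(backSol a k : ℂ)‖ := by
      rw [Complex.norm_intCast]; exact_mod_cast Int.one_le_abs hp
    have h2 := h k hk
    have h3 : ‖(backSol a k : ℂ) * Y 0‖ ≤ ‖Y k‖ + ‖Y k - backSol a k * Y 0‖ := by
      have := norm_sub_le (Y k) (Y k - backSol a k * Y 0)
      simpa using this
    rw [norm_mul] at h3
    have h4 : ‖Y 0‖ / 2 ≤ ‖Y k‖ := by nlinarith [norm_nonneg (Y 0)]
    nlinarith [norm_nonneg (Y 0)]
  induction N with
  | zero => simp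
  | succ N ih =>
    have ih' := ih (fun k hk => h k (by omega)) (fun k hk => key k (by omega))
    rw [show 2 * (N + 1) = 2 * N + 1 + 1 by ring, Finset.sum_range_succ, Finset.sum_range_succ]
    push_cast
    have h1 := sq_nonneg ‖Y (2 * N)‖
    have h2 := sq_nonneg ‖Y (2 * N + 1)‖
    rcases backSol_ne a (2 * N) with hp | hp
    · have := key _ (by omega) hp
      linarith
    · have := key _ (by omega) hp
      linarith

/-- The last entry `X n` of a vector supported on `{0, …, n}` is controlled by the residuals
`X (k + 1) + m k * X k + X (k - 1)`, `1 ≤ k ≤ n`, uniformly in `n ≥ 2 N`, when `X` satisfies the energy bound `hsum`. -/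
lemma last_le (m : ℕ → ℤ) (M c E : ℝ) (N n : ℕ) (hM : ∀ k, |(m k : ℝ)| ≤ M) (hE : 0 ≤ E)
    (hN : 8 * c ^ 2 < N) (hn : 2 * N ≤ n) (X : ℕ → ℂ) (hX : X (n + 1) = 0)
    (hres : ∀ k, k + 1 ≤ n → ‖X (k + 2) + X k + m (k + 1) * X (k + 1)‖ ≤ E)
    (hsum : ∑ k ∈ Finset.range (n + 1), ‖X k‖ ^ 2 ≤ c ^ 2 * (E ^ 2 + ‖X n‖ ^ 2)) :
    ‖X n‖ ≤ 2 * (M + 2) ^ (2 * N) * E := by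
  by_contra! hlt
  have hM0 : 0 ≤ M := (abs_nonneg _).trans (hM 0)
  have hP : 1 ≤ (M + 2) ^ (2 * N) := one_le_pow₀ (by linarith)
  have happ := backSol_approx (fun k => m (n - k)) M E (fun k => hM _) hE (fun k => X (n - k)) n
    (by
      intro h
      obtain ⟨l, rfl⟩ : ∃ l, n = l + 1 := ⟨n - 1, by omega⟩
      have := hres l le_rfl
      simpa [hX] using this)
    (by
      intro k hk
      have := hres (n - (k + 2)) (by omega)
      rw [show n - (k + 2) + 2 = n - k by omega, show n - (k + 2) + 1 = n - (k + 1) by omega] at this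
      convert this using 2
      ring)
  have hlow := sum_lower (fun k => m (n - k)) (fun k => X (n - k)) N (by
    intro k hk
    refine (happ k (by omega)).trans ?_
    have : (M + 2) ^ k ≤ (M + 2) ^ (2 * N) := pow_le_pow_right₀ (by linarith) hk.le
    have h2 : (M + 2) ^ k * E ≤ (M + 2) ^ (2 * N) * E := by gcongr
    simp only [Nat.sub_zero]
    linarith)
  have hle : ∑ k ∈ Finset.range (2 * N), ‖X (n - k)‖ ^ 2 ≤ ∑ k ∈ Finset.range (n + 1), ‖X k‖ ^ 2 := by
    rw [← Finset.sum_range_reflect (fun k => ‖X k‖ ^ 2)]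
    simp only [Nat.add_sub_cancel]
    exact Finset.sum_le_sum_of_subset_of_nonneg
      (by intro k; simp only [Finset.mem_range]; omega) (fun _ _ _ => by positivity)
  simp only [Nat.sub_zero] at hlow
  have hEX : E ≤ ‖X n‖ := by nlinarith
  have hpos : 0 < ‖X n‖ := lt_of_le_of_lt (by positivity) hlt
  have h1 : c ^ 2 * E ^ 2 ≤ c ^ 2 * ‖X n‖ ^ 2 := by gcongr
  have h2 : 0 < ‖X n‖ ^ 2 := by positivity
  nlinarith

/-! ### Finite sections, finitely supported sequences, boundedness of the potential -/

lemma norm_sq_of_support (x : lp (fun _ : ℕ => ℂ) 2) (N : ℕ) (h : ∀ k, N ≤ k → x k = 0) :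
    ‖x‖ ^ 2 = ∑ k ∈ Finset.range N, ‖x k‖ ^ 2 := by
  have h1 := lp.norm_rpow_eq_tsum (p := 2) (by norm_num) x
  simp only [ENNReal.toReal_ofNat, Real.rpow_ofNat] at h1
  rw [h1, tsum_eq_sum (s := Finset.range N)]
  intro k hk
  rw [h k (by simpa using hk)]
  simp

/-- The finite section acts on a vector as the three-term recurrence acts on its extension by zero. -/
lemma schFinSecPlus_mulVec (v : ℤ → ℝ) (n : ℕ) (X : ℕ → ℂ) (hX : X (n + 1) = 0)
    (i : Fin (n + 1)) :
    (schFinSecPlus v n *ᵥ fun j : Fin (n + 1) => X j) i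
      = (v ((i : ℕ) : ℤ) : ℂ) * X i + X (i + 1) + if (i : ℕ) = 0 then 0 else X (i - 1) := by
  obtain ⟨i, hi⟩ := i
  simp only [mulVec, dotProduct, schFinSecPlus, of_apply]
  rw [Finset.sum_fin_eq_sum_range]
  have h : ∀ j ∈ Finset.range (n + 1), (if h : j < n + 1 then
      (if i = j then ((v (i : ℤ)) : ℂ) else if i = j + 1 ∨ j = i + 1 then 1 else 0) * X j else 0)
      = (if i = j then (v (i : ℤ) : ℂ) * X j else 0) + (if i + 1 = j then X j else 0)
        + (if i - 1 = j then if i = 0 then 0 else X j else 0) := by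
    intro j hj
    rw [dif_pos (by simpa using hj)]
    split_ifs <;> first | omega | simp
  rw [Finset.sum_congr rfl h, Finset.sum_add_distrib, Finset.sum_add_distrib]
  simp only [Finset.sum_ite_eq, Finset.mem_range]
  rw [if_pos hi, if_pos (by omega : i - 1 < n + 1)]
  by_cases h1 : i + 1 < n + 1
  · rw [if_pos h1]
  · rw [if_neg h1, show i + 1 = n + 1 by omega, hX]

lemma bounded_of_periodic (K : ℕ) (hK : 1 ≤ K) (v : ℤ → ℝ)
    (hper : ∀ n : ℤ, v (n + (K : ℤ)) = v n) : ∃ M : ℝ, ∀ n, |v n| ≤ M := by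
  refine ⟨∑ r ∈ Finset.range K, |v r|, fun n => ?_⟩
  have hK' : (0 : ℤ) < K := by omega
  have h1 : v (n % K) = v n := by
    have h := (show Function.Periodic v (K : ℤ) from hper).sub_zsmul_eq (n / K) (x := n)
    rwa [smul_eq_mul, mul_comm, show n - K * (n / K) = n % K from (Int.emod_def n K).symm] at h
  have h2 := Int.emod_nonneg n hK'.ne'
  have h3 := Int.emod_lt_of_pos n hK'
  have h4 : ((n % K).toNat : ℤ) = n % K := Int.toNat_of_nonneg h2
  rw [← h1, ← h4]
  exact Finset.single_le_sum (f := fun r : ℕ => |v r|) (fun _ _ => abs_nonneg _)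
    (Finset.mem_range.2 (by omega))

/-! ### Stability of the finite sections -/

/-- for an integer-valued `K`-periodic potential, invertibility of the
one-sided discrete Schrödinger operator `H₊` implies stability of its finite sections. -/
theorem stmt3 (K : ℕ) (hK : 1 ≤ K) (v : ℤ → ℝ)
    (hper : ∀ n : ℤ, v (n + (K : ℤ)) = v n)
    (hint : ∀ n : ℤ, ∃ m : ℤ, v n = (m : ℝ))
    (Hp : lp (fun _ : ℕ => ℂ) 2 →L[ℂ] lp (fun _ : ℕ => ℂ) 2)
    (hH0 : ∀ x : lp (fun _ : ℕ => ℂ) 2, Hp x 0 = x 1 + (v 0 : ℂ) * x 0)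
    (hH : ∀ x : lp (fun _ : ℕ => ℂ) 2, ∀ k : ℕ,
      Hp x (k + 1) = x (k + 2) + x k + (v ((k : ℤ) + 1) : ℂ) * x (k + 1))
    (hbij : Function.Bijective Hp) :
    ∃ n₀ : ℕ, ∃ C : ℝ, 0 < C ∧ ∀ n : ℕ, n₀ ≤ n →
      IsUnit (schFinSecPlus v n) ∧
      ‖Matrix.toEuclideanCLM (𝕜 := ℂ) ((schFinSecPlus v n)⁻¹)‖ ≤ C := by
  obtain ⟨M, hM⟩ := bounded_of_periodic K hK v hper
  choose m hm using hint
  -- The bounded inverse theorem turns bijectivity into a lower bound.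
  obtain ⟨c, hc0, hc⟩ : ∃ c : ℝ, 0 ≤ c ∧ ∀ x, ‖x‖ ≤ c * ‖Hp x‖ := by
    let e := ContinuousLinearEquiv.ofBijective Hp (LinearMap.ker_eq_bot.2 hbij.1)
      (LinearMap.range_eq_top.2 hbij.2)
    refine ⟨‖(e.symm : lp (fun _ : ℕ => ℂ) 2 →L[ℂ] lp (fun _ : ℕ => ℂ) 2)‖, norm_nonneg _,
      fun x => ?_⟩
    have h := (e.symm : lp (fun _ : ℕ => ℂ) 2 →L[ℂ] lp (fun _ : ℕ => ℂ) 2).le_opNorm (e x)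
    simpa [e] using h
  obtain ⟨N, hN⟩ := exists_nat_gt (8 * c ^ 2)
  have hM0 : 0 ≤ M := (abs_nonneg _).trans (hM 0)
  set D : ℝ := 2 * (M + 2) ^ (2 * N) with hD
  have hD0 : 0 ≤ D := by positivity
  have main : ∀ n, 2 * N ≤ n → ∀ x : EuclideanSpace ℂ (Fin (n + 1)),
      ‖x‖ ≤ c * (1 + D) * ‖Matrix.toEuclideanCLM (𝕜 := ℂ) (schFinSecPlus v n) x‖ := by
    intro n hn x
    set E := ‖Matrix.toEuclideanCLM (𝕜 := ℂ) (schFinSecPlus v n) x‖ with hE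
    have hE0 : 0 ≤ E := norm_nonneg _
    let X₀ : ℕ → ℂ := fun k => if h : k < n + 1 then x ⟨k, h⟩ else 0
    have hX₀ : ∀ k, n + 1 ≤ k → X₀ k = 0 := fun k hk => dif_neg (by omega)
    let X : lp (fun _ : ℕ => ℂ) 2 := ⟨X₀, by
      refine (memℓp_zero ?_).of_exponent_ge zero_le
      refine (Set.finite_lt_nat (n + 1)).subset fun k hk => ?_
      by_contra hk'
      exact hk (hX₀ k (by simpa using hk'))⟩
    have hXk : ∀ k, X k = X₀ k := fun k => rfl
    have hAx : ∀ i : Fin (n + 1),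
        (Matrix.toEuclideanCLM (𝕜 := ℂ) (schFinSecPlus v n) x) i = Hp X i := by
      intro i
      have h1 : (Matrix.toEuclideanCLM (𝕜 := ℂ) (schFinSecPlus v n) x) i
          = (schFinSecPlus v n *ᵥ fun j : Fin (n + 1) => X₀ j) i := by
        rw [Matrix.ofLp_toEuclideanCLM]
        congr 2
        funext j
        simp [X₀, j.is_le]
      rw [h1, schFinSecPlus_mulVec v n X₀ (hX₀ _ le_rfl)]
      obtain ⟨i, hi⟩ := i
      cases i with
      | zero => simp [hH0, hXk]; ring
      | succ k => simp [hH, hXk]; ring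
    have hEle : ∀ k, k < n + 1 → ‖Hp X k‖ ≤ E := by
      intro k hk
      rw [← hAx ⟨k, hk⟩]
      exact PiLp.norm_apply_le _ _
    have hEsq : E ^ 2 = ∑ k ∈ Finset.range (n + 1), ‖Hp X k‖ ^ 2 := by
      rw [hE, EuclideanSpace.norm_sq_eq, Finset.sum_range]
      simp only [hAx]
    have hlast : Hp X (n + 1) = X₀ n := by
      rw [hH, hXk, hXk, hXk, hX₀ (n + 2) (by omega), hX₀ (n + 1) le_rfl]; simp
    have hHX : ‖Hp X‖ ^ 2 = E ^ 2 + ‖X₀ n‖ ^ 2 := by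
      rw [norm_sq_of_support (Hp X) (n + 2), Finset.sum_range_succ, ← hEsq, hlast]
      intro k hk
      obtain ⟨l, rfl⟩ : ∃ l, k = l + 1 := ⟨k - 1, by omega⟩
      rw [hH, hXk, hXk, hXk, hX₀ (l + 2) (by omega), hX₀ l (by omega), hX₀ (l + 1) (by omega)]; simp
    have hXsq : ‖X‖ ^ 2 = ∑ k ∈ Finset.range (n + 1), ‖X₀ k‖ ^ 2 :=
      norm_sq_of_support X (n + 1) hX₀
    have hxX : ‖x‖ ^ 2 = ‖X‖ ^ 2 := by
      rw [hXsq, EuclideanSpace.norm_sq_eq, Finset.sum_range]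
      simp [X₀, Fin.is_le]
    have hlow : ‖X‖ ^ 2 ≤ c ^ 2 * (E ^ 2 + ‖X₀ n‖ ^ 2) := by
      rw [← hHX, ← mul_pow]
      exact pow_le_pow_left₀ (norm_nonneg _) (hc X) 2
    have hXn : ‖X₀ n‖ ≤ D * E := by
      refine last_le (fun k => m k) M c E N n (fun k => ?_) hE0 hN hn X₀ (hX₀ _ le_rfl) ?_
        (hXsq ▸ hlow)
      · rw [← hm]; exact hM _
      · intro k hk
        have h := hEle (k + 1) (by omega)
        rw [hH, hm] at h
        simpa [hXk] using h
    have h2 : ‖X₀ n‖ ^ 2 ≤ (D * E) ^ 2 := pow_le_pow_left₀ (norm_nonneg _) hXn 2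
    refine (sq_le_sq₀ (norm_nonneg _) (by positivity)).1 ?_
    have h3 : 0 ≤ c ^ 2 * (D * E ^ 2) := by positivity
    have h4 : c ^ 2 * ‖X₀ n‖ ^ 2 ≤ c ^ 2 * (D * E) ^ 2 := by gcongr
    rw [hxX]
    nlinarith
  refine ⟨2 * N, c * (1 + D) + 1, by positivity, fun n hn => ?_⟩
  have hunit : IsUnit (schFinSecPlus v n) := by
    rw [← Matrix.mulVec_injective_iff_isUnit]
    intro y z hyz
    have h := main n hn (WithLp.toLp 2 (y - z))
    rw [Matrix.toEuclideanCLM_toLp, Matrix.mulVec_sub, sub_eq_zero.2 hyz] at h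
    simp only [WithLp.toLp_zero, norm_zero, mul_zero] at h
    exact sub_eq_zero.1 ((WithLp.toLp_eq_zero 2).1 (norm_le_zero_iff.1 h))
  refine ⟨hunit, ContinuousLinearMap.opNorm_le_bound _ (by positivity) fun y => ?_⟩
  have h := main n hn (Matrix.toEuclideanCLM (𝕜 := ℂ) (schFinSecPlus v n)⁻¹ y)
  rw [← mul_apply_eq_comp, ← map_mul,
    Matrix.mul_nonsing_inv _ ((Matrix.isUnit_iff_isUnit_det _).1 hunit), map_one,
    one_apply_eq_self] at h
  nlinarith [norm_nonneg y]
end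
end
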